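/- There exists a constant c > 0 such that for every ε > 0, lim_{L→∞} P_{unif,L}( there exists i ∈ {1,2,3,4} with sup_{t∈[0,1]} |π̃^L_t − c t e⃗_i| ≤ ε ) = 1, where |·| denotes the Euclidean norm on ℝ². In words: the uniform prudent walk, rescaled by its length, concentrates on a straight line segment along one of the four diagonals. -/

import Mathlib

open Filter Set

/-- One admissible step of a nearest-neighbour walk on `ℤ²`. -/
def IsStep (s : ℤ × ℤ) : Prop :=
  s = (1, 0) ∨ s = (-1, 0) ∨ s = (0, 1) ∨ s = (0, -1)

/-- The set `Ω_L` of prudent paths of length `L`. -/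
def prudentSet (L : ℕ) : Set (Fin (L + 1) → ℤ × ℤ) :=
  {π | π 0 = (0, 0) ∧ ∀ i : Fin L,
    IsStep (π i.succ - π i.castSucc) ∧
    ∀ k : ℕ, 1 ≤ k → ∀ j : Fin (L + 1), j ≤ i.castSucc →
      π i.castSucc + (k : ℤ) • (π i.succ - π i.castSucc) ≠ π j}

/-- The uniform probability of a set `A` of paths under `P_{unif,L}`. -/
noncomputable def probUnif (L : ℕ) (A : Set (Fin (L + 1) → ℤ × ℤ)) : ℝ :=
  (Nat.card ↥(A ∩ prudentSet L) : ℝ) / (Nat.card ↥(prudentSet L) : ℝ)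

/-- Coercion `ℤ² → ℝ²`. -/
def toR (p : ℤ × ℤ) : ℝ × ℝ := ((p.1 : ℝ), (p.2 : ℝ))

/-- The rescaled interpolated path `π̃^L : [0,1] → ℝ²`. -/
noncomputable def rescaled (L : ℕ) (π : Fin (L + 1) → ℤ × ℤ) (t : ℝ) : ℝ × ℝ :=
  let n : ℕ := ⌊t * L⌋₊
  let p : ℝ × ℝ := toR (π ⟨min n L, by omega⟩)
  let q : ℝ × ℝ := toR (π ⟨min (n + 1) L, by omega⟩)
  (L : ℝ)⁻¹ • (p + (t * L - (n : ℝ)) • (q - p))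

/-- Euclidean norm on `ℝ²`. -/
noncomputable def enorm2 (v : ℝ × ℝ) : ℝ := Real.sqrt (v.1 ^ 2 + v.2 ^ 2)

/-- The four diagonal directions. -/
def evec : ℕ → ℝ × ℝ
  | 1 => (1, 1)
  | 2 => (-1, 1)
  | 3 => (-1, -1)
  | 4 => (1, -1)
  | _ => (0, 0)

namespace PW

/-- The four unit steps. -/
def steps : Finset (ℤ × ℤ) := {(1, 0), (-1, 0), (0, 1), (0, -1)}

/-- `s` is an allowed prudent step of the path `p` stopped at time `n`. -/
def Allowed (n : ℕ) (p : ℕ → ℤ × ℤ) (s : ℤ × ℤ) : Prop :=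
  ∀ k : ℕ, 1 ≤ k → ∀ j ≤ n, p n + (k : ℤ) • s ≠ p j

/-- Extend the path `p` (stopped at time `n`) by the step `s`. -/
def ext (n : ℕ) (p : ℕ → ℤ × ℤ) (s : ℤ × ℤ) : ℕ → ℤ × ℤ :=
  Function.update p (n + 1) (p n + s)

lemma ext_last (n : ℕ) (p : ℕ → ℤ × ℤ) (s : ℤ × ℤ) : ext n p s (n + 1) = p n + s := by
  simp [ext]

lemma ext_of_le {n j : ℕ} (p : ℕ → ℤ × ℤ) (s : ℤ × ℤ) (h : j ≤ n) : ext n p s j = p j := by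
  simp [ext, Function.update, show j ≠ n + 1 by omega]

open Classical in
/-- Sum of `f` over all prudent extensions by `m` steps of `p` stopped at time `n`. -/
noncomputable def E (f : (ℕ → ℤ × ℤ) → ℝ) : ℕ → ℕ → (ℕ → ℤ × ℤ) → ℝ
  | 0, _, p => f p
  | m + 1, n, p => ∑ s ∈ steps, if Allowed n p s then E f m (n + 1) (ext n p s) else 0

lemma E_mono {f g : (ℕ → ℤ × ℤ) → ℝ} (h : ∀ q, f q ≤ g q) (m : ℕ) :
    ∀ n p, E f m n p ≤ E g m n p := by
  induction m with
  | zero => intro n p; exact h p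
  | succ m ih =>
    intro n p
    simp only [E]
    refine Finset.sum_le_sum fun s _ => ?_
    split_ifs
    · exact ih _ _
    · exact le_rfl

lemma E_nonneg {f : (ℕ → ℤ × ℤ) → ℝ} (h : ∀ q, 0 ≤ f q) (m : ℕ) :
    ∀ n p, 0 ≤ E f m n p := by
  induction m with
  | zero => intro n p; exact h p
  | succ m ih =>
    intro n p
    simp only [E]
    refine Finset.sum_nonneg fun s _ => ?_
    split_ifs
    · exact ih _ _
    · exact le_rfl

lemma E_add {f g : (ℕ → ℤ × ℤ) → ℝ} (m : ℕ) :
    ∀ n p, E (fun q => f q + g q) m n p = E f m n p + E g m n p := by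
  induction m with
  | zero => intro n p; rfl
  | succ m ih =>
    intro n p
    simp only [E]
    rw [← Finset.sum_add_distrib]
    refine Finset.sum_congr rfl fun s _ => ?_
    split_ifs
    · exact ih _ _
    · simp

lemma E_const_mul {f : (ℕ → ℤ × ℤ) → ℝ} (c : ℝ) (m : ℕ) :
    ∀ n p, E (fun q => c * f q) m n p = c * E f m n p := by
  induction m with
  | zero => intro n p; rfl
  | succ m ih =>
    intro n p
    simp only [E]
    rw [Finset.mul_sum]
    refine Finset.sum_congr rfl fun s _ => ?_
    split_ifs
    · exact ih _ _
    · simp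

lemma E_sum {ι : Type*} (S : Finset ι) (f : ι → (ℕ → ℤ × ℤ) → ℝ) (m n : ℕ) (p : ℕ → ℤ × ℤ) :
    E (fun q => ∑ i ∈ S, f i q) m n p = ∑ i ∈ S, E (f i) m n p := by
  classical
  induction S using Finset.induction_on with
  | empty =>
    simp only [Finset.sum_empty]
    have := E_const_mul (f := fun _ => 0) 0 m n p
    simpa using this
  | insert a S ha ih =>
    simp only [Finset.sum_insert ha]
    rw [E_add, ih]

lemma E_split (f : (ℕ → ℤ × ℤ) → ℝ) (m₂ : ℕ) (m₁ : ℕ) : ∀ n p,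
    E f (m₁ + m₂) n p = E (fun q => E f m₂ (n + m₁) q) m₁ n p := by
  induction m₁ with
  | zero => intro n p; simp [E]
  | succ m ih =>
    intro n p
    rw [show m + 1 + m₂ = (m + m₂) + 1 by omega]
    simp only [E]
    refine Finset.sum_congr rfl fun s _ => ?_
    split_ifs
    · rw [ih, show n + 1 + m = n + (m + 1) by omega]
    · rfl

/-- A factor depending only on the past can be pulled out. -/
lemma E_pull (φ : ℤ × ℤ → ℝ) (g : (ℕ → ℤ × ℤ) → ℝ) (j : ℕ) (m : ℕ) : ∀ n p, j ≤ n →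
    E (fun q => φ (q j) * g q) m n p = φ (p j) * E g m n p := by
  induction m with
  | zero => intro n p _; rfl
  | succ m ih =>
    intro n p hj
    simp only [E]
    rw [Finset.mul_sum]
    refine Finset.sum_congr rfl fun s _ => ?_
    split_ifs
    · rw [ih _ _ (by omega), ext_of_le _ _ hj]
    · simp

/-- Lattice symmetries. -/
def IsSym (e : (ℤ × ℤ) ≃+ (ℤ × ℤ)) : Prop := ∀ s, e s ∈ steps ↔ s ∈ steps

lemma allowed_sym (e : (ℤ × ℤ) ≃+ (ℤ × ℤ)) (n : ℕ) (p : ℕ → ℤ × ℤ) (s : ℤ × ℤ) :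
    Allowed n (e ∘ p) (e s) ↔ Allowed n p s := by
  unfold Allowed
  refine forall_congr' fun k => forall_congr' fun _ => forall_congr' fun j => forall_congr' fun _ => ?_
  have : (e ∘ p) n + (k : ℤ) • e s = e (p n + (k : ℤ) • s) := by
    rw [map_add, map_zsmul]; rfl
  rw [this]
  exact e.injective.ne_iff

lemma ext_sym (e : (ℤ × ℤ) ≃+ (ℤ × ℤ)) (n : ℕ) (p : ℕ → ℤ × ℤ) (s : ℤ × ℤ) :
    ext n (e ∘ p) (e s) = e ∘ ext n p s := by
  funext j
  by_cases h : j = n + 1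
  · subst h; simp [ext]
  · simp [ext, Function.update, h]

lemma E_sym (e : (ℤ × ℤ) ≃+ (ℤ × ℤ)) (he : IsSym e) (f : (ℕ → ℤ × ℤ) → ℝ) (m : ℕ) : ∀ n p,
    E f m n (e ∘ p) = E (fun q => f (e ∘ q)) m n p := by
  classical
  induction m with
  | zero => intro n p; rfl
  | succ m ih =>
    intro n p
    simp only [E]
    symm
    refine Finset.sum_equiv e.toEquiv (fun s => (he s).symm) fun s _ => ?_
    change _ = if Allowed n (e ∘ p) (e s) then E f m (n + 1) (ext n (e ∘ p) (e s)) else 0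
    rw [ext_sym, ih]
    by_cases h : Allowed n p s
    · rw [if_pos h, if_pos ((allowed_sym e n p s).2 h)]
    · rw [if_neg h, if_neg (fun h' => h ((allowed_sym e n p s).1 h'))]

/-- Exchange of coordinates. -/
def swp : (ℤ × ℤ) ≃+ (ℤ × ℤ) where
  toFun v := (v.2, v.1)
  invFun v := (v.2, v.1)
  left_inv _ := rfl
  right_inv _ := rfl
  map_add' _ _ := rfl

/-- Reflection of the first coordinate. -/
def flp : (ℤ × ℤ) ≃+ (ℤ × ℤ) where
  toFun v := (-v.1, v.2)
  invFun v := (-v.1, v.2)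
  left_inv _ := by simp
  right_inv _ := by simp
  map_add' _ _ := by simp [add_comm]

@[simp] lemma swp_apply (v : ℤ × ℤ) : swp v = (v.2, v.1) := rfl
@[simp] lemma flp_apply (v : ℤ × ℤ) : flp v = (-v.1, v.2) := rfl

lemma swp_sym : IsSym swp := by
  rintro ⟨a, b⟩
  simp [steps, Prod.ext_iff]
  omega

lemma flp_sym : IsSym flp := by
  rintro ⟨a, b⟩
  simp [steps, Prod.ext_iff]
  omega

lemma swp_swp (p : ℕ → ℤ × ℤ) : swp ∘ swp ∘ p = p := by funext j; simp
lemma flp_flp (p : ℕ → ℤ × ℤ) : flp ∘ flp ∘ p = p := by funext j; simp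

lemma IsSym.trans {e e' : (ℤ × ℤ) ≃+ (ℤ × ℤ)} (h : IsSym e) (h' : IsSym e') :
    IsSym (e.trans e') := fun s => by
  rw [AddEquiv.trans_apply, h', h]

open Classical in
/-- The one-step expansion of `E`. -/
lemma E_succ (f : (ℕ → ℤ × ℤ) → ℝ) (m n : ℕ) (p : ℕ → ℤ × ℤ) :
    E f (m + 1) n p =
      (if Allowed n p (1, 0) then E f m (n + 1) (ext n p (1, 0)) else 0)
      + (if Allowed n p (-1, 0) then E f m (n + 1) (ext n p (-1, 0)) else 0)
      + (if Allowed n p (0, 1) then E f m (n + 1) (ext n p (0, 1)) else 0)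
      + (if Allowed n p (0, -1) then E f m (n + 1) (ext n p (0, -1)) else 0) := by
  simp only [E, steps]
  rw [Finset.sum_insert (by decide), Finset.sum_insert (by decide), Finset.sum_insert (by decide),
    Finset.sum_singleton]
  ring

end PW

namespace PW

/-- The path `p` stopped at time `n` has bounding box `[-xl, xr] × [-yb, yt]` and sits on its
top side (which it reached by an upward step, and from which the way down is blocked). -/
structure RelT (n : ℕ) (p : ℕ → ℤ × ℤ) (xl xr yb yt : ℕ) : Prop where
  box : ∀ j ≤ n, -(xl : ℤ) ≤ (p j).1 ∧ (p j).1 ≤ xr ∧ -(yb : ℤ) ≤ (p j).2 ∧ (p j).2 ≤ yt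
  top : (p n).2 = yt
  cols : ∀ x : ℤ, -(xl : ℤ) ≤ x → x ≤ xr → ∃ j ≤ n, (p j).1 = x ∧ (p j).2 < yt
  rows : ∀ y : ℤ, -(yb : ℤ) ≤ y → y ≤ yt → ∃ j ≤ n, (p j).2 = y

/-- The path just moved left. -/
def Back (n : ℕ) (p : ℕ → ℤ × ℤ) : Prop := ∃ j ≤ n, p j = p n + (1, 0)

lemma Back.noRight {n : ℕ} {p : ℕ → ℤ × ℤ} (h : Back n p) : ¬ Allowed n p (1, 0) := by
  obtain ⟨j, hj, hp⟩ := h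
  intro ha
  exact ha 1 le_rfl j hj (by simp [hp])

variable {n : ℕ} {p : ℕ → ℤ × ℤ} {xl xr yb yt : ℕ}

lemma RelT.noDown (h : RelT n p xl xr yb yt) : ¬ Allowed n p (0, -1) := by
  intro ha
  obtain ⟨h1, h2, -, -⟩ := h.box n le_rfl
  obtain ⟨j, hj, hx, hy⟩ := h.cols _ h1 h2
  refine ha ((yt : ℤ) - (p j).2).toNat (by omega) j hj ?_
  have := h.top
  ext
  · simp [hx]
  · simp
    omega

lemma RelT.flip (h : RelT n p xl xr yb yt) : RelT n (flp ∘ p) xr xl yb yt where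
  box j hj := by
    have := h.box j hj
    simp
    omega
  top := by simpa using h.top
  cols x h1 h2 := by
    obtain ⟨j, hj, hx, hy⟩ := h.cols (-x) (by omega) (by omega)
    exact ⟨j, hj, by simp [hx], by simpa using hy⟩
  rows y h1 h2 := by
    obtain ⟨j, hj, hy⟩ := h.rows y h1 h2
    exact ⟨j, hj, by simpa using hy⟩

lemma RelT.up (h : RelT n p xl xr yb yt) :
    RelT (n + 1) (ext n p (0, 1)) xl xr yb (yt + 1) where
  box j hj := by
    have ht := h.top
    rcases Nat.lt_or_ge n j with h1 | h1
    · obtain rfl : j = n + 1 := by omega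
      have := h.box n le_rfl
      rw [ext_last]
      simp
      omega
    · have := h.box j h1
      rw [ext_of_le _ _ h1]
      push_cast
      omega
  top := by rw [ext_last]; simp [h.top]
  cols x h1 h2 := by
    obtain ⟨j, hj, hx, hy⟩ := h.cols x h1 h2
    refine ⟨j, by omega, ?_⟩
    rw [ext_of_le _ _ hj]
    push_cast
    exact ⟨hx, by omega⟩
  rows y h1 h2 := by
    by_cases hy : y ≤ yt
    · obtain ⟨j, hj, hy⟩ := h.rows y h1 hy
      exact ⟨j, by omega, by rw [ext_of_le _ _ hj, hy]⟩
    · refine ⟨n + 1, le_rfl, ?_⟩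
      rw [ext_last]
      simp [h.top]
      push_cast at h2
      omega

lemma RelT.left (h : RelT n p xl xr yb yt) (hx : -(xl : ℤ) < (p n).1) :
    RelT (n + 1) (ext n p (-1, 0)) xl xr yb yt where
  box j hj := by
    have ht := h.top
    rcases Nat.lt_or_ge n j with h1 | h1
    · obtain rfl : j = n + 1 := by omega
      have := h.box n le_rfl
      rw [ext_last]
      simp
      omega
    · rw [ext_of_le _ _ h1]
      exact h.box j h1
  top := by rw [ext_last]; simp [h.top]
  cols x h1 h2 := by
    obtain ⟨j, hj, hx, hy⟩ := h.cols x h1 h2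
    refine ⟨j, by omega, ?_⟩
    rw [ext_of_le _ _ hj]
    exact ⟨hx, hy⟩
  rows y h1 h2 := by
    obtain ⟨j, hj, hy⟩ := h.rows y h1 h2
    exact ⟨j, by omega, by rw [ext_of_le _ _ hj, hy]⟩

lemma back_left (n : ℕ) (p : ℕ → ℤ × ℤ) : Back (n + 1) (ext n p (-1, 0)) :=
  ⟨n, by omega, by rw [ext_last, ext_of_le _ _ le_rfl]; ext <;> simp⟩

lemma RelT.leftExit (h : RelT n p xl xr yb yt) (hx : (p n).1 = -(xl : ℤ)) :
    RelT (n + 1) (swp ∘ flp ∘ ext n p (-1, 0)) yb yt xr (xl + 1) where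
  box j hj := by
    have ht := h.top
    rcases Nat.lt_or_ge n j with h1 | h1
    · obtain rfl : j = n + 1 := by omega
      have := h.box n le_rfl
      simp [ext_last]
      omega
    · have := h.box j h1
      simp [ext_of_le _ _ h1]
      omega
  top := by simp [ext_last, hx]; ring
  cols y h1 h2 := by
    obtain ⟨j, hj, hy⟩ := h.rows y h1 h2
    refine ⟨j, by omega, ?_⟩
    have := h.box j hj
    simp [ext_of_le _ _ hj, hy]
    omega
  rows x h1 h2 := by
    by_cases hx' : x ≤ xl
    · obtain ⟨j, hj, hx, hy⟩ := h.cols (-x) (by omega) (by omega)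
      exact ⟨j, by omega, by simp [ext_of_le _ _ hj, hx]⟩
    · refine ⟨n + 1, le_rfl, ?_⟩
      push_cast at h2
      simp [ext_last, hx]
      omega

lemma flp_ext_left (n : ℕ) (p : ℕ → ℤ × ℤ) :
    ext n (flp ∘ p) (-1, 0) = flp ∘ ext n p (1, 0) := by
  rw [← ext_sym]; rfl

lemma allowed_flp_left (n : ℕ) (p : ℕ → ℤ × ℤ) :
    Allowed n (flp ∘ p) (-1, 0) ↔ Allowed n p (1, 0) := by
  exact allowed_sym flp n p (1, 0)

lemma RelT.right (h : RelT n p xl xr yb yt) (hx : (p n).1 < xr) :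
    RelT (n + 1) (flp ∘ ext n p (1, 0)) xr xl yb yt := by
  rw [← flp_ext_left]
  exact h.flip.left (by simp; exact hx)

lemma back_right (n : ℕ) (p : ℕ → ℤ × ℤ) : Back (n + 1) (flp ∘ ext n p (1, 0)) := by
  rw [← flp_ext_left]
  exact back_left _ _

lemma RelT.rightExit (h : RelT n p xl xr yb yt) (hx : (p n).1 = xr) :
    RelT (n + 1) (swp ∘ ext n p (1, 0)) yb yt xl (xr + 1) := by
  have := h.flip.leftExit (by simp [hx])
  rw [flp_ext_left, flp_flp] at this
  exact this

/-- A path in a configuration to which the potential applies, up to symmetry. -/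
def Reach (n : ℕ) (p : ℕ → ℤ × ℤ) : Prop :=
  ∃ e : (ℤ × ℤ) ≃+ (ℤ × ℤ), IsSym e ∧ ∃ xl xr yb yt, RelT n (e ∘ p) xl xr yb yt

lemma RelT.reach_of_sym {e : (ℤ × ℤ) ≃+ (ℤ × ℤ)} (he : IsSym e) (h : RelT n (e ∘ p) xl xr yb yt) :
    Reach n p := ⟨e, he, _, _, _, _, h⟩

lemma Reach.of_sym {e : (ℤ × ℤ) ≃+ (ℤ × ℤ)} (he : IsSym e) (h : Reach n (e ∘ p)) : Reach n p := by
  obtain ⟨e', he', a, b, c, d, h⟩ := h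
  exact ⟨e.trans e', he.trans he', a, b, c, d, h⟩

lemma RelT.reach (h : RelT n p xl xr yb yt) : Reach n p :=
  ⟨AddEquiv.refl _, fun _ => Iff.rfl, xl, xr, yb, yt, h⟩

lemma RelT.reach_ext (h : RelT n p xl xr yb yt) {s : ℤ × ℤ} (hs : s ∈ steps)
    (ha : Allowed n p s) : Reach (n + 1) (ext n p s) := by
  have hb := h.box n le_rfl
  simp only [steps, Finset.mem_insert, Finset.mem_singleton] at hs
  rcases hs with rfl | rfl | rfl | rfl
  · by_cases hx : (p n).1 < xr
    · exact Reach.of_sym flp_sym (h.right hx).reach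
    · exact Reach.of_sym swp_sym (h.rightExit (by omega)).reach
  · by_cases hx : -(xl : ℤ) < (p n).1
    · exact (h.left hx).reach
    · exact Reach.of_sym flp_sym (Reach.of_sym swp_sym (h.leftExit (by omega)).reach)
  · exact h.up.reach
  · exact absurd ha h.noDown

lemma Reach.ext_step (h : Reach n p) {s : ℤ × ℤ} (hs : s ∈ steps)
    (ha : Allowed n p s) : Reach (n + 1) (ext n p s) := by
  obtain ⟨e, he, a, b, c, d, h⟩ := h
  have := h.reach_ext ((he s).2 hs) ((allowed_sym e n p s).2 ha)
  rw [ext_sym] at this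
  exact Reach.of_sym he this

lemma relT_init (q : ℕ → ℤ × ℤ) (h0 : q 0 = 0) (h1 : q 1 = (0, 1)) : RelT 1 q 0 0 0 1 where
  box j hj := by interval_cases j <;> simp [h0, h1]
  top := by simp [h1]
  cols x hx hx' := ⟨0, by omega, by simp [h0]; simp at hx hx'; omega⟩
  rows y hy hy' := by
    simp at hy hy'
    by_cases h : y = 0
    · exact ⟨0, by omega, by simp [h0, h]⟩
    · exact ⟨1, by omega, by simp [h1]; omega⟩

/-- Some symmetry maps the first step to the upward step. -/
lemma first_step {s : ℤ × ℤ} (hs : s ∈ steps) :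
    RelT 1 (ext 0 0 s) 0 0 0 1 ∨ RelT 1 (swp ∘ ext 0 0 s) 0 0 0 1 ∨
    RelT 1 (swp ∘ flp ∘ ext 0 0 s) 0 0 0 1 ∨
    RelT 1 (swp ∘ flp ∘ swp ∘ ext 0 0 s) 0 0 0 1 := by
  have e0 : ∀ s, ext 0 0 s 0 = 0 := fun s => by rw [ext_of_le _ _ le_rfl]; rfl
  have e1 : ∀ s, ext 0 0 s 1 = s := fun s => by rw [ext_last]; simp
  simp only [steps, Finset.mem_insert, Finset.mem_singleton] at hs
  rcases hs with rfl | rfl | rfl | rfl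
  · right; left; apply relT_init <;> simp [e0, e1]
  · right; right; left; apply relT_init <;> simp [e0, e1]
  · left; apply relT_init <;> simp [e0, e1]
  · right; right; right
    have : RelT 1 (swp ∘ flp ∘ swp ∘ ext 0 0 ((0, -1) : ℤ × ℤ)) 0 0 0 1 := by
      apply relT_init <;> simp [e0, e1]
    exact this

lemma first_reach {s : ℤ × ℤ} (hs : s ∈ steps) : Reach 1 (ext 0 0 s) := by
  rcases first_step hs with h | h | h | h
  · exact h.reach
  · exact Reach.of_sym swp_sym h.reach
  · exact Reach.of_sym flp_sym (Reach.of_sym swp_sym h.reach)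
  · exact Reach.of_sym swp_sym (Reach.of_sym flp_sym (Reach.of_sym swp_sym h.reach))

lemma E_mono_reach {f g : (ℕ → ℤ × ℤ) → ℝ} {N : ℕ} (h : ∀ q, Reach N q → f q ≤ g q) (m : ℕ) :
    ∀ n p, n + m = N → Reach n p → E f m n p ≤ E g m n p := by
  induction m with
  | zero => intro n p hn hp; exact h p (by simpa [← hn] using hp)
  | succ m ih =>
    intro n p hn hp
    simp only [E]
    refine Finset.sum_le_sum fun s hs => ?_
    split_ifs with ha
    · exact ih _ _ (by omega) (hp.ext_step hs ha)
    · exact le_rfl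

lemma E_mono_init {f g : (ℕ → ℤ × ℤ) → ℝ} {N : ℕ} (hN : 1 ≤ N)
    (h : ∀ q, Reach N q → f q ≤ g q) : E f N 0 0 ≤ E g N 0 0 := by
  obtain ⟨m, rfl⟩ : ∃ m, N = m + 1 := ⟨N - 1, by omega⟩
  simp only [E]
  refine Finset.sum_le_sum fun s hs => ?_
  split_ifs with ha
  · exact E_mono_reach h m _ _ (by omega) (first_reach hs)
  · exact le_rfl

end PW

namespace PW

/-- Parameters of the potential attached to one coordinate direction. -/
structure HP where
  y : ℝ
  Y : ℝ
  κ : ℝ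
  α : ℝ
  A : ℝ
  B : ℝ
  τ : ℝ

/-- Compatibility conditions on the parameters. -/
structure Half (z δ ρ : ℝ) (P Q : HP) : Prop where
  hz : 0 < z
  hδ : 0 < δ
  hρ : 0 < ρ
  hρ1 : ρ < 1
  hy : 0 < P.y
  hyY : P.y ≤ P.Y
  hY1 : 1 ≤ P.y * P.Y
  hκ : 0 < P.κ
  hα : 0 < P.α
  hA : 0 < P.A
  hB : 0 < P.B
  hτ : 0 < P.τ
  c1 : z * Q.y + z * P.κ * P.A ≤ P.A
  c2 : z * Q.y + z * P.B ≤ P.κ * P.B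
  c3 : z * Q.y + z * P.κ * P.A + z * P.B ≤ 1
  c4 : P.y * (Q.α + δ) ≤ P.α * P.B
  c5 : z * Q.y + z * P.τ * P.Y ≤ P.τ
  c6 : z * Q.y + 2 * (z * P.τ * P.Y) ≤ 1
  c7 : P.Y * P.κ ≤ ρ

/-- Correction factor. -/
noncomputable def nf (ρ : ℝ) (k : ℕ) : ℝ := Real.exp (ρ ^ k / (1 - ρ))

lemma nf_pos (ρ : ℝ) (k : ℕ) : 0 < nf ρ k := Real.exp_pos _

lemma one_le_nf {ρ : ℝ} (h0 : 0 < ρ) (h1 : ρ < 1) (k : ℕ) : 1 ≤ nf ρ k :=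
  Real.one_le_exp (div_nonneg (pow_nonneg h0.le _) (by linarith))

lemma nf_le {ρ : ℝ} (h0 : 0 < ρ) (h1 : ρ < 1) (k : ℕ) : nf ρ k ≤ nf ρ 0 := by
  unfold nf
  have : ρ ^ k ≤ ρ ^ 0 := pow_le_pow_of_le_one h0.le h1.le (Nat.zero_le _)
  have h : 0 < 1 - ρ := by linarith
  gcongr

lemma nf_step {ρ : ℝ} (_h0 : 0 < ρ) (h1 : ρ < 1) (k : ℕ) :
    (1 + ρ ^ k) * nf ρ (k + 1) ≤ nf ρ k := by
  have h : 1 - ρ ≠ 0 := by linarith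
  have : nf ρ k = Real.exp (ρ ^ k) * nf ρ (k + 1) := by
    unfold nf
    rw [← Real.exp_add]
    congr 1
    field_simp
    ring
  rw [this]
  have h2 := Real.add_one_le_exp (ρ ^ k)
  have := nf_pos ρ (k + 1)
  gcongr
  linarith

lemma nf_succ_le {ρ : ℝ} (h0 : 0 < ρ) (h1 : ρ < 1) (k : ℕ) : nf ρ (k + 1) ≤ nf ρ k := by
  have h := nf_step h0 h1 k
  have h2 : 0 ≤ ρ ^ k * nf ρ (k + 1) := mul_nonneg (pow_nonneg h0.le _) (nf_pos _ _).le
  linarith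

/-- Potential just after an upward step. -/
noncomputable def hO (ρ δ : ℝ) (P Q : HP) (xl xr yb yt : ℕ) (x : ℤ) : ℝ :=
  nf ρ (xl + xr + 1) * nf ρ (yb + yt) * Q.y ^ yt *
    (P.α * P.y ^ xr * P.κ ^ ((xr : ℤ) - x).toNat + P.α * P.y ^ xl * P.κ ^ ((xl : ℤ) + x).toNat
      + δ * P.y ^ x.natAbs)

/-- Potential just after a step to the left. -/
noncomputable def hL (ρ δ : ℝ) (P Q : HP) (xl xr yb yt : ℕ) (x : ℤ) : ℝ :=
  nf ρ (xl + xr + 1) * nf ρ (yb + yt) * Q.y ^ yt *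
    (P.α * P.y ^ xr * P.κ ^ ((xr : ℤ) - x).toNat * P.A
      + P.α * P.y ^ xl * P.κ ^ ((xl : ℤ) + x).toNat * (P.κ * P.B)
      + δ * P.y ^ x.natAbs * P.τ)

/-- Upper bound for the potential after a step to the left taken at `x`. -/
noncomputable def fL (ρ δ : ℝ) (P Q : HP) (xl xr yb yt : ℕ) (x : ℤ) : ℝ :=
  nf ρ (xl + xr + 1) * nf ρ (yb + yt) * Q.y ^ yt *
    (P.α * P.y ^ xr * P.κ ^ ((xr : ℤ) - x).toNat * (P.κ * P.A)
      + P.α * P.y ^ xl * P.κ ^ ((xl : ℤ) + x).toNat * P.B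
      + δ * P.y ^ x.natAbs * (P.τ * P.Y))

section
variable {z δ ρ : ℝ} {P Q : HP} {xl xr yb yt : ℕ} {x : ℤ}

lemma pow_natAbs_sub (h : Half z δ ρ P Q) (x : ℤ) :
    P.y ^ (x - 1).natAbs ≤ P.Y * P.y ^ x.natAbs := by
  have hy := h.hy
  rcases le_or_gt x 0 with hx | hx
  · rw [show (x - 1).natAbs = x.natAbs + 1 by omega, pow_succ']
    have := h.hyY
    gcongr
  · rw [show x.natAbs = (x - 1).natAbs + 1 by omega, pow_succ', ← mul_assoc]
    have h1 := h.hY1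
    have h2 : 0 < P.y ^ (x - 1).natAbs := by positivity
    nlinarith

lemma hO_flip : hO ρ δ P Q xr xl yb yt (-x) = hO ρ δ P Q xl xr yb yt x := by
  unfold hO
  rw [show xr + xl + 1 = xl + xr + 1 by ring, Int.natAbs_neg, sub_neg_eq_add, ← sub_eq_add_neg]
  ring

lemma left_interior (h : Half z δ ρ P Q) (h' : Half z δ ρ Q P) (hx : -(xl : ℤ) < x)
    (hx' : x ≤ xr) :
    hL ρ δ P Q xl xr yb yt (x - 1) ≤ fL ρ δ P Q xl xr yb yt x := by
  unfold hL fL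
  rw [show ((xr : ℤ) - (x - 1)).toNat = ((xr : ℤ) - x).toNat + 1 by omega,
    show ((xl : ℤ) + x).toNat = ((xl : ℤ) + (x - 1)).toNat + 1 by omega]
  have h1 := pow_natAbs_sub h x
  have := nf_pos ρ (xl + xr + 1)
  have := nf_pos ρ (yb + yt)
  have hδ := h.hδ
  have hτ := h.hτ
  have hQ := h'.hy
  gcongr ?_ * ?_
  have : δ * P.y ^ (x - 1).natAbs * P.τ ≤ δ * P.y ^ x.natAbs * (P.τ * P.Y) := by
    calc δ * P.y ^ (x - 1).natAbs * P.τ ≤ δ * (P.Y * P.y ^ x.natAbs) * P.τ := by gcongr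
      _ = _ := by ring
  rw [pow_succ, pow_succ]
  linarith

lemma pow_corner (h : Half z δ ρ P Q) (a b : ℕ) :
    P.y ^ a * P.κ ^ (a + b) ≤ P.y ^ b * ρ ^ (a + b) := by
  have hy := h.hy
  have hκ := h.hκ
  have hY : 0 < P.Y := lt_of_lt_of_le hy h.hyY
  have h1 : P.y ^ a ≤ P.Y ^ a := pow_le_pow_left₀ hy.le h.hyY a
  have h2 : 1 ≤ (P.y * P.Y) ^ b := one_le_pow₀ h.hY1
  calc P.y ^ a * P.κ ^ (a + b) ≤ P.Y ^ a * P.κ ^ (a + b) := by gcongr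
    _ = 1 * (P.Y ^ a * P.κ ^ (a + b)) := by ring
    _ ≤ (P.y * P.Y) ^ b * (P.Y ^ a * P.κ ^ (a + b)) := by gcongr
    _ = P.y ^ b * (P.Y * P.κ) ^ (a + b) := by rw [mul_pow, mul_pow, pow_add P.Y]; ring
    _ ≤ P.y ^ b * ρ ^ (a + b) := by
      have := h.c7
      gcongr

lemma left_exit (h : Half z δ ρ P Q) (h' : Half z δ ρ Q P) :
    hO ρ δ Q P yb yt xr (xl + 1) yt ≤ fL ρ δ P Q xl xr yb yt (-(xl : ℤ)) := by
  have hy := h.hy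
  have hy' := h'.hy
  have hα := h.hα
  have hα' := h'.hα
  have hA := h.hA
  have hB := h.hB
  have hκ := h.hκ
  have hδ := h.hδ
  have hτ := h.hτ
  have hY : 0 < P.Y := lt_of_lt_of_le hy h.hyY
  have hρ := h.hρ
  have n1 := nf_pos ρ (xl + xr + 1)
  have n2 := nf_pos ρ (yb + yt)
  have n3 := nf_pos ρ (yb + yt + 1)
  have hlow : nf ρ (xl + xr + 1) * nf ρ (yb + yt) * Q.y ^ yt * (P.α * P.y ^ xl * P.B)
      ≤ fL ρ δ P Q xl xr yb yt (-(xl : ℤ)) := by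
    unfold fL
    rw [show ((xl : ℤ) + -(xl : ℤ)).toNat = 0 by omega, pow_zero]
    gcongr
    have e1 : 0 ≤ P.α * P.y ^ xr * P.κ ^ ((xr : ℤ) - -(xl : ℤ)).toNat * (P.κ * P.A) := by
      positivity
    have e2 : 0 ≤ δ * P.y ^ (-(xl : ℤ)).natAbs * (P.τ * P.Y) := by positivity
    linarith
  refine le_trans ?_ hlow
  unfold hO
  rw [show ((yt : ℤ) - (yt : ℤ)).toNat = 0 by omega, pow_zero,
    show ((yb : ℤ) + (yt : ℤ)).toNat = yb + yt by omega, Int.natAbs_natCast,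
    show xr + (xl + 1) = xl + xr + 1 by ring]
  have hc := pow_corner h' yb yt
  have hn := nf_step hρ h.hρ1 (yb + yt)
  have h4 := h.c4
  have hrr : 0 ≤ ρ ^ (yb + yt) := by positivity
  calc nf ρ (yb + yt + 1) * nf ρ (xl + xr + 1) * P.y ^ (xl + 1) *
        (Q.α * Q.y ^ yt * 1 + Q.α * Q.y ^ yb * Q.κ ^ (yb + yt) + δ * Q.y ^ yt)
      = nf ρ (yb + yt + 1) * nf ρ (xl + xr + 1) * P.y ^ (xl + 1) *
        (Q.α * Q.y ^ yt + Q.α * (Q.y ^ yb * Q.κ ^ (yb + yt)) + δ * Q.y ^ yt) := by ring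
    _ ≤ nf ρ (yb + yt + 1) * nf ρ (xl + xr + 1) * P.y ^ (xl + 1) *
        (Q.α * Q.y ^ yt + Q.α * (Q.y ^ yt * ρ ^ (yb + yt))
          + δ * Q.y ^ yt * (1 + ρ ^ (yb + yt))) := by
        have : δ * Q.y ^ yt ≤ δ * Q.y ^ yt * (1 + ρ ^ (yb + yt)) := by
          have : 0 ≤ δ * Q.y ^ yt := by positivity
          nlinarith
        gcongr
    _ = ((1 + ρ ^ (yb + yt)) * nf ρ (yb + yt + 1)) * nf ρ (xl + xr + 1) * P.y ^ xl * Q.y ^ yt *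
        (P.y * (Q.α + δ)) := by rw [pow_succ]; ring
    _ ≤ nf ρ (yb + yt) * nf ρ (xl + xr + 1) * P.y ^ xl * Q.y ^ yt * (P.α * P.B) := by
        gcongr
    _ = _ := by ring

lemma up_le (h : Half z δ ρ P Q) (h' : Half z δ ρ Q P) :
    hO ρ δ P Q xl xr yb (yt + 1) x ≤ nf ρ (xl + xr + 1) * nf ρ (yb + yt) * Q.y ^ yt *
      (Q.y * (P.α * P.y ^ xr * P.κ ^ ((xr : ℤ) - x).toNat
        + P.α * P.y ^ xl * P.κ ^ ((xl : ℤ) + x).toNat + δ * P.y ^ x.natAbs)) := by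
  unfold hO
  have hy := h.hy
  have hy' := h'.hy
  have hα := h.hα
  have hκ := h.hκ
  have hδ := h.hδ
  have n1 := nf_pos ρ (xl + xr + 1)
  have hn := nf_succ_le h.hρ h.hρ1 (yb + yt)
  rw [show yb + (yt + 1) = yb + yt + 1 by ring, pow_succ, ← mul_assoc, mul_assoc _ Q.y]
  gcongr

lemma stepL (h : Half z δ ρ P Q) (h' : Half z δ ρ Q P) :
    z * hO ρ δ P Q xl xr yb (yt + 1) x + z * fL ρ δ P Q xl xr yb yt x
      ≤ hL ρ δ P Q xl xr yb yt x := by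
  have hu := up_le (xl := xl) (xr := xr) (yb := yb) (yt := yt) (x := x) h h'
  have hz := h.hz
  have hy := h.hy
  have hy' := h'.hy
  have hα := h.hα
  have hκ := h.hκ
  have hδ := h.hδ
  have n1 := nf_pos ρ (xl + xr + 1)
  have n2 := nf_pos ρ (yb + yt)
  have hpre : 0 ≤ nf ρ (xl + xr + 1) * nf ρ (yb + yt) * Q.y ^ yt := by positivity
  have ha : 0 ≤ P.α * P.y ^ xr * P.κ ^ ((xr : ℤ) - x).toNat := by positivity
  have hb : 0 ≤ P.α * P.y ^ xl * P.κ ^ ((xl : ℤ) + x).toNat := by positivity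
  have he : 0 ≤ δ * P.y ^ x.natAbs := by positivity
  refine le_trans (add_le_add_left (mul_le_mul_of_nonneg_left hu hz.le) _) ?_
  unfold fL hL
  generalize nf ρ (xl + xr + 1) * nf ρ (yb + yt) * Q.y ^ yt = p at *
  generalize P.α * P.y ^ xr * P.κ ^ ((xr : ℤ) - x).toNat = a at *
  generalize P.α * P.y ^ xl * P.κ ^ ((xl : ℤ) + x).toNat = b at *
  generalize δ * P.y ^ x.natAbs = e at *
  have := mul_le_mul_of_nonneg_left h.c1 ha
  have := mul_le_mul_of_nonneg_left h.c2 hb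
  have := mul_le_mul_of_nonneg_left h.c5 he
  calc z * (p * (Q.y * (a + b + e))) + z * (p * (a * (P.κ * P.A) + b * P.B + e * (P.τ * P.Y)))
      = p * (a * (z * Q.y + z * P.κ * P.A) + b * (z * Q.y + z * P.B)
          + e * (z * Q.y + z * P.τ * P.Y)) := by ring
    _ ≤ p * (a * P.A + b * (P.κ * P.B) + e * P.τ) := by gcongr

lemma stepO (h : Half z δ ρ P Q) (h' : Half z δ ρ Q P) :
    z * hO ρ δ P Q xl xr yb (yt + 1) x + z * fL ρ δ P Q xl xr yb yt x
      + z * fL ρ δ P Q xr xl yb yt (-x) ≤ hO ρ δ P Q xl xr yb yt x := by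
  have hu := up_le (xl := xl) (xr := xr) (yb := yb) (yt := yt) (x := x) h h'
  have hz := h.hz
  have hy := h.hy
  have hy' := h'.hy
  have hα := h.hα
  have hκ := h.hκ
  have hδ := h.hδ
  have n1 := nf_pos ρ (xl + xr + 1)
  have n2 := nf_pos ρ (yb + yt)
  have hpre : 0 ≤ nf ρ (xl + xr + 1) * nf ρ (yb + yt) * Q.y ^ yt := by positivity
  have ha : 0 ≤ P.α * P.y ^ xr * P.κ ^ ((xr : ℤ) - x).toNat := by positivity
  have hb : 0 ≤ P.α * P.y ^ xl * P.κ ^ ((xl : ℤ) + x).toNat := by positivity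
  have he : 0 ≤ δ * P.y ^ x.natAbs := by positivity
  refine le_trans (add_le_add_left (add_le_add_left (mul_le_mul_of_nonneg_left hu hz.le) _) _) ?_
  unfold fL hO
  rw [show xr + xl + 1 = xl + xr + 1 by ring, Int.natAbs_neg, sub_neg_eq_add, ← sub_eq_add_neg]
  generalize nf ρ (xl + xr + 1) * nf ρ (yb + yt) * Q.y ^ yt = p at *
  generalize P.α * P.y ^ xr * P.κ ^ ((xr : ℤ) - x).toNat = a at *
  generalize P.α * P.y ^ xl * P.κ ^ ((xl : ℤ) + x).toNat = b at *
  generalize δ * P.y ^ x.natAbs = e at *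
  have := mul_le_mul_of_nonneg_left h.c3 ha
  have := mul_le_mul_of_nonneg_left h.c3 hb
  have := mul_le_mul_of_nonneg_left h.c6 he
  calc z * (p * (Q.y * (a + b + e))) + z * (p * (a * (P.κ * P.A) + b * P.B + e * (P.τ * P.Y)))
        + z * (p * (b * (P.κ * P.A) + a * P.B + e * (P.τ * P.Y)))
      = p * (a * (z * Q.y + z * P.κ * P.A + z * P.B) + b * (z * Q.y + z * P.κ * P.A + z * P.B)
          + e * (z * Q.y + 2 * (z * P.τ * P.Y))) := by ring
    _ ≤ p * (a * 1 + b * 1 + e * 1) := by gcongr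
    _ = _ := by ring

end

/-- Exponential weight of the end point. -/
noncomputable def wt (y₁ y₂ : ℝ) (N : ℕ) (q : ℕ → ℤ × ℤ) : ℝ :=
  y₁ ^ (q N).1.natAbs * y₂ ^ (q N).2.natAbs

lemma E_wt_flp (y₁ y₂ : ℝ) (N m n : ℕ) (p : ℕ → ℤ × ℤ) :
    E (wt y₁ y₂ N) m n (flp ∘ p) = E (wt y₁ y₂ N) m n p := by
  rw [E_sym flp flp_sym]
  congr 1
  funext q
  simp [wt]

lemma E_wt_swp (y₁ y₂ : ℝ) (N m n : ℕ) (p : ℕ → ℤ × ℤ) :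
    E (wt y₁ y₂ N) m n (swp ∘ p) = E (wt y₂ y₁ N) m n p := by
  rw [E_sym swp swp_sym]
  congr 1
  funext q
  simp [wt, mul_comm]

/-- The supermartingale bound. -/
theorem claim {z δ ρ K : ℝ} (hK : 1 ≤ K * δ) (m : ℕ) : ∀ (P Q : HP), Half z δ ρ P Q →
    Half z δ ρ Q P → 1 ≤ K * δ * P.τ → 1 ≤ K * δ * Q.τ → ∀ n p xl xr yb yt,
    RelT n p xl xr yb yt →
    z ^ m * E (wt P.y Q.y (n + m)) m n p ≤ K * hO ρ δ P Q xl xr yb yt (p n).1 ∧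
    (Back n p → z ^ m * E (wt P.y Q.y (n + m)) m n p ≤ K * hL ρ δ P Q xl xr yb yt (p n).1) := by
  classical
  induction m with
  | zero =>
    intro P Q h h' hP _ n p xl xr yb yt hR
    have hKp : 0 < K := by
      by_contra hcon
      have := h.hδ
      nlinarith
    have hy := h.hy
    have hy' := h'.hy
    have hα := h.hα
    have hκ := h.hκ
    have hA := h.hA
    have hB := h.hB
    have hδ := h.hδ
    have hτ := h.hτ
    have n1 := one_le_nf h.hρ h.hρ1 (xl + xr + 1)
    have n2 := one_le_nf h.hρ h.hρ1 (yb + yt)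
    have n12 := one_le_mul_of_one_le_of_one_le n1 n2
    simp only [pow_zero, one_mul, E, wt, add_zero]
    rw [hR.top, Int.natAbs_natCast]
    constructor
    · unfold hO
      calc P.y ^ (p n).1.natAbs * Q.y ^ yt
          ≤ K * δ * (nf ρ (xl + xr + 1) * nf ρ (yb + yt)) *
              (P.y ^ (p n).1.natAbs * Q.y ^ yt) :=
            le_mul_of_one_le_left (by positivity) (one_le_mul_of_one_le_of_one_le hK n12)
        _ = K * (nf ρ (xl + xr + 1) * nf ρ (yb + yt) * Q.y ^ yt *
              (0 + δ * P.y ^ (p n).1.natAbs)) := by ring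
        _ ≤ _ := by gcongr; positivity
    · intro _
      unfold hL
      calc P.y ^ (p n).1.natAbs * Q.y ^ yt
          ≤ K * δ * P.τ * (nf ρ (xl + xr + 1) * nf ρ (yb + yt)) *
              (P.y ^ (p n).1.natAbs * Q.y ^ yt) :=
            le_mul_of_one_le_left (by positivity) (one_le_mul_of_one_le_of_one_le hP n12)
        _ = K * (nf ρ (xl + xr + 1) * nf ρ (yb + yt) * Q.y ^ yt *
              (0 + δ * P.y ^ (p n).1.natAbs * P.τ)) := by ring
        _ ≤ _ := by gcongr; positivity
  | succ m ih =>
    intro P Q h h' hP hQ n p xl xr yb yt hR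
    have hKp : 0 < K := by
      by_contra hcon
      have := h.hδ
      nlinarith
    have hz := h.hz
    have hbox := hR.box n le_rfl
    have hN : n + (m + 1) = n + 1 + m := by ring
    have hnn : ∀ (y₁ y₂ : ℝ), 0 < y₁ → 0 < y₂ → ∀ N m n p, 0 ≤ E (wt y₁ y₂ N) m n p := by
      intro y₁ y₂ h1 h2 N m n p
      exact E_nonneg (fun q => by unfold wt; positivity) m n p
    -- the step up
    have hup : z ^ m * E (wt P.y Q.y (n + (m + 1))) m (n + 1) (ext n p (0, 1))
        ≤ K * hO ρ δ P Q xl xr yb (yt + 1) (p n).1 := by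
      have := (ih P Q h h' hP hQ (n + 1) _ _ _ _ _ hR.up).1
      rw [hN]
      rw [ext_last] at this
      simpa using this
    -- the step to the left
    have hleft : ∀ (p : ℕ → ℤ × ℤ) (xl xr : ℕ), RelT n p xl xr yb yt →
        z ^ m * E (wt P.y Q.y (n + (m + 1))) m (n + 1) (ext n p (-1, 0))
        ≤ K * fL ρ δ P Q xl xr yb yt (p n).1 := by
      intro p xl xr hR
      have hbox := hR.box n le_rfl
      rw [hN]
      by_cases hx : -(xl : ℤ) < (p n).1
      · have := (ih P Q h h' hP hQ (n + 1) _ _ _ _ _ (hR.left hx)).2 (back_left _ _)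
        refine this.trans ?_
        rw [ext_last]
        have := left_interior (yb := yb) (yt := yt) h h' hx hbox.2.1
        gcongr
        simpa [← sub_eq_add_neg] using this
      · have hx' : (p n).1 = -(xl : ℤ) := by omega
        have := (ih Q P h' h hQ hP (n + 1) _ _ _ _ _ (hR.leftExit hx')).1
        rw [E_wt_swp, E_wt_flp] at this
        refine this.trans ?_
        have := left_exit (xl := xl) (xr := xr) (yb := yb) (yt := yt) h h'
        rw [hx']
        gcongr
        simpa [ext_last, hR.top] using this
    have hL := hleft p xl xr hR
    have hRt : z ^ m * E (wt P.y Q.y (n + (m + 1))) m (n + 1) (ext n p (1, 0))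
        ≤ K * fL ρ δ P Q xr xl yb yt (-(p n).1) := by
      have := hleft _ _ _ hR.flip
      rw [flp_ext_left, E_wt_flp] at this
      simpa using this
    have hif : ∀ (c : Prop) [Decidable c] (a b : ℝ), 0 ≤ a → z ^ m * a ≤ b →
        z ^ m * (if c then a else 0) ≤ b := by
      intro c _ a b ha hab
      split_ifs
      · exact hab
      · rw [mul_zero]; exact le_trans (by positivity) hab
    have i1 := hif (Allowed n p (0, 1)) _ _ (hnn _ _ h.hy h'.hy _ _ _ _) hup
    have i2 := hif (Allowed n p (-1, 0)) _ _ (hnn _ _ h.hy h'.hy _ _ _ _) hL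
    have i3 := hif (Allowed n p (1, 0)) _ _ (hnn _ _ h.hy h'.hy _ _ _ _) hRt
    constructor
    · rw [E_succ, if_neg hR.noDown]
      have := stepO (xl := xl) (xr := xr) (yb := yb) (yt := yt) (x := (p n).1) h h'
      have := mul_le_mul_of_nonneg_left this hKp.le
      have j1 := mul_le_mul_of_nonneg_left i1 hz.le
      have j2 := mul_le_mul_of_nonneg_left i2 hz.le
      have j3 := mul_le_mul_of_nonneg_left i3 hz.le
      rw [pow_succ]
      linarith
    · intro hb
      rw [E_succ, if_neg hR.noDown, if_neg hb.noRight]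
      have := stepL (xl := xl) (xr := xr) (yb := yb) (yt := yt) (x := (p n).1) h h'
      have := mul_le_mul_of_nonneg_left this hKp.le
      have j1 := mul_le_mul_of_nonneg_left i1 hz.le
      have j2 := mul_le_mul_of_nonneg_left i2 hz.le
      rw [pow_succ]
      linarith

end PW

namespace PW

/-- The path sits on the top row, at distance at most `d` from the right end of its range. -/
structure RelN (n : ℕ) (p : ℕ → ℤ × ℤ) (d : ℕ) : Prop where
  top : ∀ j ≤ n, (p j).2 ≤ (p n).2
  right : ∀ j ≤ n, (p j).1 ≤ (p n).1 + d

/-- Nothing visited to the left. -/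
def ClrL (n : ℕ) (p : ℕ → ℤ × ℤ) : Prop := ∀ j ≤ n, (p j).2 = (p n).2 → (p n).1 ≤ (p j).1
/-- Nothing visited to the right. -/
def ClrR (n : ℕ) (p : ℕ → ℤ × ℤ) : Prop := ∀ j ≤ n, (p j).2 = (p n).2 → (p j).1 ≤ (p n).1

section
variable {n : ℕ} {p : ℕ → ℤ × ℤ} {d : ℕ}

lemma RelN.allowedU (h : RelN n p d) : Allowed n p (0, 1) := by
  intro k hk j hj heq
  have := h.top j hj
  have h2 := congrArg Prod.snd heq
  simp at h2
  omega

lemma ClrL.allowed (h : ClrL n p) : Allowed n p (-1, 0) := by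
  intro k hk j hj heq
  have h1 := congrArg Prod.fst heq
  have h2 := congrArg Prod.snd heq
  simp at h1 h2
  have := h j hj h2.symm
  omega

lemma ClrR.allowed (h : ClrR n p) : Allowed n p (1, 0) := by
  intro k hk j hj heq
  have h1 := congrArg Prod.fst heq
  have h2 := congrArg Prod.snd heq
  simp at h1 h2
  have := h j hj h2.symm
  omega

lemma forall_ext {n : ℕ} {p : ℕ → ℤ × ℤ} {s : ℤ × ℤ} {R : ℤ × ℤ → Prop} :
    (∀ j ≤ n + 1, R (ext n p s j)) ↔ (∀ j ≤ n, R (p j)) ∧ R (p n + s) := by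
  constructor
  · intro h
    refine ⟨fun j hj => ?_, ?_⟩
    · have := h j (by omega)
      rwa [ext_of_le _ _ hj] at this
    · have := h (n + 1) le_rfl
      rwa [ext_last] at this
  · rintro ⟨h1, h2⟩ j hj
    rcases Nat.lt_or_ge n j with h | h
    · obtain rfl : j = n + 1 := by omega
      rwa [ext_last]
    · rw [ext_of_le _ _ h]
      exact h1 j h

lemma RelN.up (h : RelN n p d) : RelN (n + 1) (ext n p (0, 1)) d ∧
    ClrL (n + 1) (ext n p (0, 1)) ∧ ClrR (n + 1) (ext n p (0, 1)) := by
  have ht := h.top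
  have hr := h.right
  refine ⟨⟨?_, ?_⟩, ?_, ?_⟩
  · rw [ext_last]
    refine (forall_ext (R := fun v => v.2 ≤ (p n + (0, 1)).2)).2 ⟨fun j hj => ?_, le_rfl⟩
    have := ht j hj
    simp; omega
  · rw [ext_last]
    refine (forall_ext (R := fun v => v.1 ≤ (p n + (0, 1)).1 + d)).2 ⟨fun j hj => ?_, ?_⟩
    swap
    · show _ ≤ _ + _
      omega
    have := hr j hj
    simp; omega
  · unfold ClrL
    rw [ext_last]
    refine (forall_ext (R := fun v => v.2 = (p n + (0, 1)).2 → (p n + (0, 1)).1 ≤ v.1)).2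
      ⟨fun j hj => ?_, fun _ => le_rfl⟩
    have := ht j hj
    simp; omega
  · unfold ClrR
    rw [ext_last]
    refine (forall_ext (R := fun v => v.2 = (p n + (0, 1)).2 → v.1 ≤ (p n + (0, 1)).1)).2
      ⟨fun j hj => ?_, fun _ => le_rfl⟩
    have := ht j hj
    simp; omega

lemma RelN.left (h : RelN n p d) (hL : ClrL n p) : RelN (n + 1) (ext n p (-1, 0)) (d + 1) ∧
    ClrL (n + 1) (ext n p (-1, 0)) := by
  have ht := h.top
  have hr := h.right
  refine ⟨⟨?_, ?_⟩, ?_⟩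
  · rw [ext_last]
    refine (forall_ext (R := fun v => v.2 ≤ (p n + (-1, 0)).2)).2 ⟨fun j hj => ?_, le_rfl⟩
    have := ht j hj
    simp; omega
  · rw [ext_last]
    refine (forall_ext (R := fun v => v.1 ≤ (p n + (-1, 0)).1 + ((d + 1 : ℕ) : ℤ))).2
      ⟨fun j hj => ?_, ?_⟩
    swap
    · show _ ≤ _ + _
      omega
    have := hr j hj
    simp; omega
  · unfold ClrL
    rw [ext_last]
    refine (forall_ext (R := fun v => v.2 = (p n + (-1, 0)).2 → (p n + (-1, 0)).1 ≤ v.1)).2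
      ⟨fun j hj => ?_, fun _ => le_rfl⟩
    have := hL j hj
    simp; omega

lemma RelN.rightStep (h : RelN n p (d + 1)) (hL : ClrR n p) : RelN (n + 1) (ext n p (1, 0)) d ∧
    ClrR (n + 1) (ext n p (1, 0)) := by
  have ht := h.top
  have hr := h.right
  refine ⟨⟨?_, ?_⟩, ?_⟩
  · rw [ext_last]
    refine (forall_ext (R := fun v => v.2 ≤ (p n + (1, 0)).2)).2 ⟨fun j hj => ?_, le_rfl⟩
    have := ht j hj
    simp; omega
  · rw [ext_last]
    refine (forall_ext (R := fun v => v.1 ≤ (p n + (1, 0)).1 + (d : ℤ))).2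
      ⟨fun j hj => ?_, ?_⟩
    swap
    · show _ ≤ _ + _
      omega
    have := hr j hj
    push_cast at this
    simp; omega
  · unfold ClrR
    rw [ext_last]
    refine (forall_ext (R := fun v => v.2 = (p n + (1, 0)).2 → v.1 ≤ (p n + (1, 0)).1)).2
      ⟨fun j hj => ?_, fun _ => le_rfl⟩
    have := hL j hj
    simp; omega

lemma RelN.swap (h : RelN n p 0) : RelN n (swp ∘ p) 0 := by
  refine ⟨fun j hj => ?_, fun j hj => ?_⟩
  · have := h.right j hj
    simp at this ⊢; omega
  · have := h.top j hj
    simp at this ⊢; omega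

lemma swp_ext_up (n : ℕ) (p : ℕ → ℤ × ℤ) :
    ext n (swp ∘ p) (0, 1) = swp ∘ ext n p (1, 0) := by
  rw [← ext_sym]; rfl

lemma RelN.allowedR (h : RelN n p 0) : Allowed n p (1, 0) :=
  (allowed_sym swp n p (1, 0)).1 h.swap.allowedU

lemma RelN.rightExit (h : RelN n p 0) : RelN (n + 1) (swp ∘ ext n p (1, 0)) 0 ∧
    ClrL (n + 1) (swp ∘ ext n p (1, 0)) ∧ ClrR (n + 1) (swp ∘ ext n p (1, 0)) := by
  rw [← swp_ext_up]
  exact h.swap.up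

end

lemma E_one_swp (m n : ℕ) (p : ℕ → ℤ × ℤ) :
    E (fun _ => 1) m n (swp ∘ p) = E (fun _ => 1) m n p := by
  rw [E_sym swp swp_sym]

/-- Lower bound through the harmonic function of the two-sided walk. -/
theorem lower {z : ℝ} (hz : 0.4 < z) (hz' : z < 0.41)
    (hroot : 2 * z ^ 3 - 2 * z ^ 2 - 2 * z + 1 = 0) (m : ℕ) : ∀ n p d, RelN n p d →
    (ClrL n p → ClrR n p → (2 * z) ^ d ≤ z ^ m * E (fun _ => 1) m n p) ∧
    (ClrL n p → (2 * z) ^ d * (z / (1 - 2 * z ^ 2)) ≤ z ^ m * E (fun _ => 1) m n p) ∧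
    (ClrR n p → (2 * z) ^ d * (2 * z) ≤ z ^ m * E (fun _ => 1) m n p) := by
  classical
  have hD : 0 < 1 - 2 * z ^ 2 := by nlinarith
  have hD' : 1 - 2 * z ^ 2 ≠ 0 := hD.ne'
  have hpow : ∀ d : ℕ, (2 * z) ^ d ≤ 1 := fun d => pow_le_one₀ (by linarith) (by linarith)
  have hpow0 : ∀ d : ℕ, 0 ≤ (2 * z) ^ d := fun d => pow_nonneg (by linarith) _
  have hA1 : z / (1 - 2 * z ^ 2) ≤ 1 := by
    rw [div_le_one hD]; nlinarith
  have hAm : z / (1 - 2 * z ^ 2) * (1 - 2 * z ^ 2) = z := div_mul_cancel₀ _ hD'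
  have hA0 : 0 < z / (1 - 2 * z ^ 2) := div_pos (by linarith) hD
  generalize z / (1 - 2 * z ^ 2) = A at *
  have hA : A = z + z * (2 * z) * A := by linear_combination hAm
  have hO : 1 = z + z * (2 * z) * A + z := by
    have : (z + z * (2 * z) * A + z - 1) * (1 - 2 * z ^ 2) = 0 := by
      linear_combination (2 * z ^ 2) * hAm - hroot
    rcases mul_eq_zero.1 this with h | h
    · linarith
    · exact absurd h hD'
  have hz0 : 0 < z := by linarith
  induction m with
  | zero =>
    intro n p d _
    simp only [pow_zero, one_mul, E]
    have h1 := hpow d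
    have h0 := hpow0 d
    refine ⟨fun _ _ => h1, fun _ => ?_, fun _ => ?_⟩
    · exact mul_le_one₀ h1 hA0.le hA1
    · exact mul_le_one₀ h1 (by linarith) (by linarith)
  | succ m ih =>
    intro n p d hR
    have hnn : ∀ m n p, 0 ≤ E (fun _ => 1) m n p := fun m n p => E_nonneg (fun _ => zero_le_one) m n p
    have hif : ∀ (c : Prop) [Decidable c] (a : ℝ), 0 ≤ a → 0 ≤ (if c then a else 0) := by
      intro c _ a ha
      split_ifs
      · exact ha
      · exact le_rfl
    have hu : (2 * z) ^ d ≤ z ^ m * E (fun _ => 1) m (n + 1) (ext n p (0, 1)) :=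
      (ih _ _ _ hR.up.1).1 hR.up.2.1 hR.up.2.2
    have hl : ClrL n p → (2 * z) ^ (d + 1) * A ≤
        z ^ m * E (fun _ => 1) m (n + 1) (ext n p (-1, 0)) := fun h =>
      (ih _ _ _ (hR.left h).1).2.1 (hR.left h).2
    have hr : ClrR n p → Allowed n p (1, 0) ∧ (2 * z) ^ d ≤
        z ^ m * E (fun _ => 1) m (n + 1) (ext n p (1, 0)) := by
      intro h
      refine ⟨h.allowed, ?_⟩
      cases d with
      | zero =>
        have := (ih _ _ _ hR.rightExit.1).1 hR.rightExit.2.1 hR.rightExit.2.2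
        rwa [E_one_swp] at this
      | succ d =>
        rw [pow_succ]
        exact (ih _ _ _ (hR.rightStep h).1).2.2 (hR.rightStep h).2
    have h0 := hpow0 d
    have zm : 0 ≤ z ^ m := by positivity
    have k1 := mul_nonneg zm (hif (Allowed n p (1, 0)) _ (hnn m (n + 1) (ext n p (1, 0))))
    have k2 := mul_nonneg zm (hif (Allowed n p (-1, 0)) _ (hnn m (n + 1) (ext n p (-1, 0))))
    have k3 := mul_nonneg zm (hif (Allowed n p (0, -1)) _ (hnn m (n + 1) (ext n p (0, -1))))
    have k1' := mul_nonneg hz0.le k1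
    have k2' := mul_nonneg hz0.le k2
    have k3' := mul_nonneg hz0.le k3
    have u' := mul_le_mul_of_nonneg_left hu hz0.le
    rw [E_succ, if_pos hR.allowedU]
    refine ⟨fun hcl hcr => ?_, fun hcl => ?_, fun hcr => ?_⟩
    · rw [if_pos hcl.allowed, if_pos hcr.allowed]
      have l' := mul_le_mul_of_nonneg_left (hl hcl) hz0.le
      have r' := mul_le_mul_of_nonneg_left (hr hcr).2 hz0.le
      rw [pow_succ] at l'
      have : (2 * z) ^ d = (2 * z) ^ d * (z + z * (2 * z) * A + z) := by rw [← hO, mul_one]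
      rw [pow_succ z]
      linarith
    · rw [if_pos hcl.allowed]
      have l' := mul_le_mul_of_nonneg_left (hl hcl) hz0.le
      rw [pow_succ] at l'
      have : (2 * z) ^ d * A = (2 * z) ^ d * (z + z * (2 * z) * A) := by rw [← hA]
      rw [pow_succ z]
      linarith
    · rw [if_pos hcr.allowed]
      have r' := mul_le_mul_of_nonneg_left (hr hcr).2 hz0.le
      rw [pow_succ z]
      linarith

lemma lower_init {z : ℝ} (hz : 0.4 < z) (hz' : z < 0.41)
    (hroot : 2 * z ^ 3 - 2 * z ^ 2 - 2 * z + 1 = 0) (m : ℕ) :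
    1 ≤ z ^ m * E (fun _ => 1) m 0 0 := by
  have h : RelN 0 0 0 := ⟨fun j hj => by simp, fun j hj => by simp⟩
  have := (lower hz hz' hroot m 0 0 0 h).1 (fun j hj => by simp) (fun j hj => by simp)
  simpa using this

end PW

namespace PW

/-- Prudent paths of length `L`, as functions on `ℕ` vanishing beyond `L`. -/
def PS (L : ℕ) : Set (ℕ → ℤ × ℤ) :=
  {q | q 0 = 0 ∧ (∀ j, L < j → q j = 0) ∧
    ∀ i < L, q (i + 1) - q i ∈ steps ∧ Allowed i q (q (i + 1) - q i)}

lemma allowed_congr {n : ℕ} {p q : ℕ → ℤ × ℤ} (h : ∀ j ≤ n, p j = q j) (s : ℤ × ℤ) :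
    Allowed n p s ↔ Allowed n q s := by
  unfold Allowed
  refine forall_congr' fun k => forall_congr' fun _ => forall_congr' fun j => forall_congr' fun hj => ?_
  rw [h n le_rfl, h j hj]

lemma E_one (f : (ℕ → ℤ × ℤ) → ℝ) (n : ℕ) (p : ℕ → ℤ × ℤ) [DecidablePred (Allowed n p)] :
    E f 1 n p = ∑ s ∈ steps, if Allowed n p s then f (ext n p s) else 0 := by
  simp only [E]
  refine Finset.sum_congr rfl fun s _ => ?_
  split_ifs <;> rfl

theorem exists_T (L : ℕ) : ∃ T : Finset (ℕ → ℤ × ℤ), (∀ q, q ∈ T ↔ q ∈ PS L) ∧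
    ∀ f, E f L 0 0 = ∑ q ∈ T, f q := by
  classical
  induction L with
  | zero =>
    refine ⟨{0}, fun q => ?_, fun f => by simp [E]⟩
    simp only [Finset.mem_singleton, PS, mem_ofPred_eq]
    constructor
    · rintro rfl
      simp
    · rintro ⟨h0, h1, -⟩
      funext j
      rcases Nat.eq_zero_or_pos j with rfl | hj
      · exact h0
      · exact h1 j hj
  | succ L ih =>
    obtain ⟨T, hT, hE⟩ := ih
    let U := (T ×ˢ steps).filter (fun x => Allowed L x.1 x.2)
    have hzero : ∀ p ∈ T, p (L + 1) = 0 := fun p hp => ((hT p).1 hp).2.1 _ (by omega)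
    have hinj : Set.InjOn (fun x : (ℕ → ℤ × ℤ) × (ℤ × ℤ) => ext L x.1 x.2) U := by
      rintro ⟨p, s⟩ hp ⟨p', s'⟩ hp' heq
      simp only [U, Finset.coe_filter, Finset.mem_product, mem_ofPred_eq] at hp hp'
      have heq' : ext L p s = ext L p' s' := heq
      have hpp : p = p' := by
        funext j
        by_cases hj : j = L + 1
        · subst hj; rw [hzero p hp.1.1, hzero p' hp'.1.1]
        · have := congrFun heq' j
          simpa [ext, Function.update, hj] using this
      subst hpp
      have := congrFun heq' (L + 1)
      rw [ext_last, ext_last] at this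
      rw [add_left_cancel this]
    refine ⟨U.image (fun x => ext L x.1 x.2), fun q => ?_, fun f => ?_⟩
    · have hmem : q ∈ U.image (fun x => ext L x.1 x.2) ↔
          ∃ p s, ((p ∈ T ∧ s ∈ steps) ∧ Allowed L p s) ∧ ext L p s = q := by
        simp only [Finset.mem_image, U, Finset.mem_filter, Finset.mem_product]
        constructor
        · rintro ⟨⟨p, s⟩, h⟩
          exact ⟨p, s, h⟩
        · rintro ⟨p, s, h⟩
          exact ⟨⟨p, s⟩, h⟩
      rw [hmem]
      constructor
      · rintro ⟨p, s, ⟨⟨hp, hs⟩, ha⟩, rfl⟩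
        obtain ⟨h0, h1, h2⟩ := (hT p).1 hp
        refine ⟨?_, fun j hj => ?_, fun i hi => ?_⟩
        · rw [ext_of_le _ _ (Nat.zero_le _), h0]
        · simp only [ext, Function.update]
          rw [dif_neg (by omega)]
          exact h1 j (by omega)
        · rcases Nat.lt_or_ge i L with hiL | hiL
          · rw [ext_of_le _ _ (by omega : i + 1 ≤ L), ext_of_le _ _ (by omega : i ≤ L)]
            refine ⟨(h2 i hiL).1, (allowed_congr (fun j hj => ?_) _).2 (h2 i hiL).2⟩
            exact ext_of_le _ _ (by omega)
          · obtain rfl : i = L := by omega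
            rw [ext_last, ext_of_le _ _ le_rfl, add_sub_cancel_left]
            exact ⟨hs, (allowed_congr (fun j hj => ext_of_le _ _ hj) _).2 ha⟩
      · rintro ⟨h0, h1, h2⟩
        have hag : ∀ j ≤ L, Function.update q (L + 1) 0 j = q j := fun j hj =>
          Function.update_of_ne (by omega) _ _
        refine ⟨Function.update q (L + 1) 0, q (L + 1) - q L, ⟨⟨(hT _).2 ⟨?_, fun j hj => ?_, fun i hi => ?_⟩, (h2 L (by omega)).1⟩, ?_⟩, ?_⟩
        · rw [hag 0 (by omega), h0]
        · by_cases hj' : j = L + 1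
          · subst hj'; simp
          · rw [Function.update_of_ne hj']
            exact h1 j (by omega)
        · rw [hag _ (by omega), hag _ (by omega)]
          exact ⟨(h2 i (by omega)).1, (allowed_congr (fun j hj => hag j (by omega)) _).2 (h2 i (by omega)).2⟩
        · exact (allowed_congr hag _).2 (h2 L (by omega)).2
        · funext j
          by_cases hj : j = L + 1
          · subst hj
            rw [ext_last, hag L le_rfl]
            abel
          · simp [ext, Function.update, hj]
    · rw [E_split f 1 L 0 0, hE, Finset.sum_image hinj, Finset.sum_filter, Finset.sum_product]
      refine Finset.sum_congr rfl fun p _ => ?_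
      rw [E_one, Nat.zero_add]

/-- Restriction to `{0, …, L}`. -/
def restr (L : ℕ) (q : ℕ → ℤ × ℤ) : Fin (L + 1) → ℤ × ℤ := fun i => q i

lemma mem_steps (s : ℤ × ℤ) : s ∈ steps ↔ IsStep s := by
  simp [steps, IsStep]

lemma restr_mem {L : ℕ} {q : ℕ → ℤ × ℤ} (h : q ∈ PS L) : restr L q ∈ prudentSet L := by
  obtain ⟨h0, h1, h2⟩ := h
  refine ⟨h0, fun i => ?_⟩
  have := h2 i i.2
  refine ⟨?_, fun k hk j hj => ?_⟩
  · rw [← mem_steps]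
    exact this.1
  · exact this.2 k hk j (by simpa [Fin.le_def] using hj)

lemma exists_of_mem {L : ℕ} {π : Fin (L + 1) → ℤ × ℤ} (h : π ∈ prudentSet L) :
    ∃ q ∈ PS L, restr L q = π := by
  obtain ⟨h0, h2⟩ := h
  let q : ℕ → ℤ × ℤ := fun j => if hj : j < L + 1 then π ⟨j, hj⟩ else 0
  have hq : ∀ j (hj : j < L + 1), q j = π ⟨j, hj⟩ := fun j hj => dif_pos hj
  refine ⟨q, ⟨?_, fun j hj => dif_neg (by omega), fun i hi => ?_⟩, ?_⟩
  · rw [hq 0 (by omega)]; exact h0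
  · have := h2 ⟨i, hi⟩
    rw [hq (i + 1) (by omega), hq i (by omega), mem_steps]
    refine ⟨this.1, fun k hk j hj => ?_⟩
    rw [hq i (by omega), hq j (by omega)]
    exact this.2 k hk ⟨j, by omega⟩ (by simpa [Fin.le_def] using hj)
  · funext i
    exact hq i i.2

lemma restr_inj {L : ℕ} : Set.InjOn (restr L) (PS L) := by
  intro p hp q hq h
  funext j
  rcases Nat.lt_or_ge L j with hj | hj
  · rw [hp.2.1 j hj, hq.2.1 j hj]
  · exact congrFun h ⟨j, by omega⟩

open Classical in
theorem card_eq (L : ℕ) (A : Set (Fin (L + 1) → ℤ × ℤ)) :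
    (Nat.card ↥(A ∩ prudentSet L) : ℝ) = E (fun q => if restr L q ∈ A then 1 else 0) L 0 0 := by
  obtain ⟨T, hT, hE⟩ := exists_T L
  rw [hE, Finset.sum_boole]
  congr 1
  have : A ∩ prudentSet L = restr L '' (T.filter (fun q => restr L q ∈ A) : Finset _) := by
    ext π
    simp only [mem_inter_iff, mem_image, Finset.coe_filter, mem_ofPred_eq, hT]
    constructor
    · rintro ⟨hA, hπ⟩
      obtain ⟨q, hq, rfl⟩ := exists_of_mem hπ
      exact ⟨q, ⟨hq, hA⟩, rfl⟩
    · rintro ⟨q, ⟨hq, hA⟩, rfl⟩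
      exact ⟨hA, restr_mem hq⟩
  rw [this, Nat.card_image_of_injOn]
  · simp
  · intro p hp q hq h
    simp only [Finset.coe_filter, mem_ofPred_eq, hT] at hp hq
    exact restr_inj hp.1 hq.1 h

end PW

namespace PW

/-- Build the parameters of one direction. -/
noncomputable def mkHP (z y o Y p α : ℝ) : HP where
  y := y
  Y := Y
  κ := z * (1 + p)
  α := α
  A := z * o / (1 - z ^ 2 * (1 + p))
  B := o / p
  τ := z * o / (1 - z * Y)

lemma mkHalf {z y o Y p α δ ρ : ℝ} {Q : HP} (hz : 0 < z) (hδ : 0 < δ) (hρ : 0 < ρ) (hρ1 : ρ < 1)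
    (hy : 0 < y) (hyY : y ≤ Y) (hY1 : 1 ≤ y * Y) (hα : 0 < α) (hp : 0 < p) (ho : 0 < o)
    (hQ : Q.y = o) (h1 : z ^ 2 * (1 + p) < 1)
    (h3 : z * o * ((1 - z ^ 2 * (1 + p))⁻¹ + p⁻¹) ≤ 1)
    (h4 : y * (Q.α + δ) ≤ α * (o / p)) (h5 : z * Y < 1)
    (h6 : z * o * (1 - z * Y) + 2 * z * z * o * Y ≤ 1 - z * Y)
    (h7 : Y * (z * (1 + p)) ≤ ρ) : Half z δ ρ (mkHP z y o Y p α) Q := by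
  have d1 : 0 < 1 - z ^ 2 * (1 + p) := by linarith
  have d2 : 0 < 1 - z * Y := by linarith
  have hA : z * o / (1 - z ^ 2 * (1 + p)) * (1 - z ^ 2 * (1 + p)) = z * o :=
    div_mul_cancel₀ _ d1.ne'
  have hB : o / p * p = o := div_mul_cancel₀ _ hp.ne'
  have hτ : z * o / (1 - z * Y) * (1 - z * Y) = z * o := div_mul_cancel₀ _ d2.ne'
  have h3' : z * o / (1 - z ^ 2 * (1 + p)) + z * (o / p) ≤ 1 := by
    calc _ = z * o * ((1 - z ^ 2 * (1 + p))⁻¹ + p⁻¹) := by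
          rw [div_eq_mul_inv, div_eq_mul_inv]; ring
      _ ≤ 1 := h3
  refine ⟨hz, hδ, hρ, hρ1, hy, hyY, hY1, by simp only [mkHP]; positivity, hα, ?_, ?_, ?_, ?_, ?_, ?_, h4, ?_, ?_, h7⟩
  · exact div_pos (by positivity) d1
  · exact div_pos ho hp
  · exact div_pos (by positivity) d2
  · simp only [mkHP, hQ]; linear_combination -hA
  · simp only [mkHP, hQ]; linear_combination - z * hB
  · simp only [mkHP, hQ]; linear_combination h3' - hA
  · simp only [mkHP, hQ]; linear_combination -hτ
  · simp only [mkHP, hQ]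
    have : 2 * z * z * o * Y / (1 - z * Y) ≤ 1 - z * o := by
      rw [div_le_iff₀ d2]; linarith
    calc _ = z * o + 2 * z * z * o * Y / (1 - z * Y) := by ring
      _ ≤ 1 := by linarith

lemma eventually_lt_one {F : ℝ → ℝ} {d : ℝ} (h : HasDerivAt F d 0) (hd : d < 0) (h0 : F 0 = 1) :
    ∀ᶠ t in nhdsWithin 0 (Ioi 0), F t < 1 := by
  have h1 := (hasDerivAt_iff_tendsto_slope.1 h).eventually_lt_const hd
  have h2 : nhdsWithin (0 : ℝ) (Ioi 0) ≤ nhdsWithin 0 {0}ᶜ :=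
    nhdsWithin_mono _ (fun x hx => by simp at hx ⊢; exact hx.ne')
  filter_upwards [h2 h1, self_mem_nhdsWithin] with t ht ht0
  have ht0 : 0 < t := ht0
  rw [slope_def_field, h0, sub_zero, div_neg_iff] at ht
  rcases ht with h | h <;> linarith

/-- The critical parameter. -/
structure Crit (z : ℝ) : Prop where
  lo : 0.4 < z
  hi : z < 0.41
  root : 2 * z ^ 3 - 2 * z ^ 2 - 2 * z + 1 = 0

lemma exists_crit : ∃ z, Crit z := by
  have hc : ContinuousOn (fun z : ℝ => 2 * z ^ 3 - 2 * z ^ 2 - 2 * z + 1) (Icc 0.4 0.41) := by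
    fun_prop
  have := intermediate_value_Icc' (by norm_num) hc
  obtain ⟨z, hz, h0⟩ := this (show (0 : ℝ) ∈ Icc _ _ by constructor <;> norm_num)
  have h0 : 2 * z ^ 3 - 2 * z ^ 2 - 2 * z + 1 = 0 := h0
  refine ⟨z, lt_of_le_of_ne hz.1 ?_, lt_of_le_of_ne hz.2 ?_, h0⟩
  · rintro rfl; norm_num at h0
  · rintro rfl; norm_num at h0

/-- The derivative constants. -/
noncomputable def ca (z : ℝ) : ℝ := 1 + 4 * z ^ 3 / (1 - 2 * z ^ 2) ^ 2
/-- The derivative constants. -/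
noncomputable def cb (z : ℝ) : ℝ := z - z ^ 3 / (1 - 2 * z ^ 2) ^ 2

lemma Crit.D {z : ℝ} (h : Crit z) : 0.6 < 1 - 2 * z ^ 2 := by
  have := h.lo; have := h.hi; nlinarith

lemma Crit.pos {z : ℝ} (h : Crit z) : 0 < z := by have := h.lo; linarith

lemma Crit.ca_pos {z : ℝ} (h : Crit z) : 1 < ca z := by
  have := h.D
  have := h.pos
  have : 0 < 4 * z ^ 3 / (1 - 2 * z ^ 2) ^ 2 := by positivity
  unfold ca; linarith

lemma Crit.cb_pos {z : ℝ} (h : Crit z) : 0 < cb z := by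
  have hD := h.D
  have hz := h.pos
  have := h.hi
  have h2 : z < 1 - 2 * z ^ 2 := by linarith
  unfold cb
  rw [sub_pos, div_lt_iff₀ (by positivity)]
  have : z ^ 2 < (1 - 2 * z ^ 2) ^ 2 := by gcongr
  nlinarith

lemma Crit.F {z : ℝ} (h : Crit z) {η o r : ℝ} (hlt : ca z * η + o - cb z * r < 0) :
    ∀ᶠ t in nhdsWithin 0 (Ioi 0), z * Real.exp (η * t) * Real.exp (o * t) *
      ((1 - (z * Real.exp (η * t)) ^ 2 * (1 + Real.exp (r * t)))⁻¹ + (Real.exp (r * t))⁻¹) < 1 := by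
  have hD := h.D
  have hD0 : 1 - 2 * z ^ 2 ≠ 0 := by linarith
  have ex : ∀ k : ℝ, HasDerivAt (fun t => Real.exp (k * t)) k 0 := by
    intro k
    have := ((hasDerivAt_id (0 : ℝ)).const_mul k).exp
    simpa using this
  have hZ := (ex η).const_mul z
  have hI := (((hZ.pow 2).mul ((ex r).const_add 1)).const_sub 1).inv (by simp; intro h; apply hD0; linarith)
  have hJ := (ex r).inv (by simp)
  have hF := (hZ.mul (ex o)).mul (hI.add hJ)
  have key : (1 - 2 * z ^ 2)⁻¹ + 1 = z⁻¹ := by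
    have hz := h.pos
    field_simp
    have := h.root
    linarith
  refine eventually_lt_one hF ?_ ?_
  · simp
    rw [show z ^ 2 * (1 + 1) = 2 * z ^ 2 by ring, key]
    have hzz : z * z⁻¹ = 1 := mul_inv_cancel₀ h.pos.ne'
    refine lt_of_eq_of_lt ?_ hlt
    unfold ca cb
    linear_combination (η + o) * hzz
  · simp
    rw [show z ^ 2 * (1 + 1) = 2 * z ^ 2 by ring, key]
    exact mul_inv_cancel₀ h.pos.ne'

theorem Crit.params {z : ℝ} (h : Crit z) {s η : ℝ} (hs : 2 * ca z * η + s < 0) :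
    ∀ᶠ t in nhdsWithin 0 (Ioi 0), ∃ δ ρ P Q, P.y = Real.exp (s * t) ∧ Q.y = 1 ∧
      Half (z * Real.exp (η * t)) δ ρ P Q ∧ Half (z * Real.exp (η * t)) δ ρ Q P := by
  have hb := h.cb_pos
  obtain ⟨k, hk⟩ : ∃ k, k = -(2 * ca z * η + s) / (4 * cb z) := ⟨_, rfl⟩
  have hk0 : 0 < k := by rw [hk]; exact div_pos (by linarith) (by linarith)
  have hkb : k * (4 * cb z) = -(2 * ca z * η + s) := by rw [hk]; field_simp
  obtain ⟨p1, hp1⟩ : ∃ x, x = ca z * η / cb z + k := ⟨_, rfl⟩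
  obtain ⟨q1, hq1⟩ : ∃ x, x = (ca z * η + s) / cb z + k := ⟨_, rfl⟩
  have hp1b : cb z * p1 = ca z * η + k * cb z := by rw [hp1]; field_simp
  have hq1b : cb z * q1 = ca z * η + s + k * cb z := by rw [hq1]; field_simp
  have hpq : p1 + q1 < 0 := by
    have : cb z * (p1 + q1) < 0 := by nlinarith
    exact (pos_iff_neg_of_mul_neg this).1 hb
  have F1 := h.F (η := η) (o := 0) (r := p1) (by nlinarith)
  have F2 := h.F (η := η) (o := s) (r := q1) (by nlinarith)
  have ev : ∀ (G : ℝ → ℝ) (c : ℝ), Continuous G → G 0 < c →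
      ∀ᶠ t in nhdsWithin 0 (Ioi 0), G t < c := by
    intro G c hG h0
    exact (hG.tendsto 0).mono_left nhdsWithin_le_nhds |>.eventually_lt_const h0
  have hlo := h.lo
  have hhi := h.hi
  have e1 := ev (fun t => (z * Real.exp (η * t)) ^ 2 * (1 + Real.exp (p1 * t))) 1 (by fun_prop)
    (by simp; nlinarith)
  have e2 := ev (fun t => (z * Real.exp (η * t)) ^ 2 * (1 + Real.exp (q1 * t))) 1 (by fun_prop)
    (by simp; nlinarith)
  have e3 := ev (fun t => z * Real.exp (η * t) * Real.exp (|s| * t)) 1 (by fun_prop)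
    (by simp; nlinarith)
  have e4 := ev (fun t => z * Real.exp (η * t) * 1) 1 (by fun_prop)
    (by simp; nlinarith)
  have e5 := ev (fun t => z * Real.exp (η * t) * 1 * (1 - z * Real.exp (η * t) * Real.exp (|s| * t))
    + 2 * (z * Real.exp (η * t)) * (z * Real.exp (η * t)) * 1 * Real.exp (|s| * t)
    - (1 - z * Real.exp (η * t) * Real.exp (|s| * t))) 0 (by fun_prop)
    (by simp; nlinarith)
  have e6 := ev (fun t => z * Real.exp (η * t) * Real.exp (s * t) * (1 - z * Real.exp (η * t) * 1)
    + 2 * (z * Real.exp (η * t)) * (z * Real.exp (η * t)) * Real.exp (s * t) * 1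
    - (1 - z * Real.exp (η * t) * 1)) 0 (by fun_prop)
    (by simp; nlinarith)
  have e7 := ev (fun t => Real.exp (|s| * t) * (z * Real.exp (η * t) * (1 + Real.exp (p1 * t)))) 0.9
    (by fun_prop) (by simp; nlinarith)
  have e8 := ev (fun t => 1 * (z * Real.exp (η * t) * (1 + Real.exp (q1 * t)))) 0.9
    (by fun_prop) (by simp; nlinarith)
  filter_upwards [F1, F2, e1, e2, e3, e4, e5, e6, e7, e8, self_mem_nhdsWithin] with t
    F1 F2 e1 e2 e3 e4 e5 e6 e7 e8 ht
  have ht : 0 < t := ht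
  have hp := Real.exp_pos (p1 * t)
  have hq := Real.exp_pos (q1 * t)
  have hy := Real.exp_pos (s * t)
  have hpq1 : Real.exp (p1 * t) * Real.exp (q1 * t) < 1 := by
    rw [← Real.exp_add, Real.exp_lt_one_iff]
    nlinarith
  have hyY : Real.exp (s * t) ≤ Real.exp (|s| * t) := by
    gcongr; exact le_abs_self s
  have hY1 : 1 ≤ Real.exp (s * t) * Real.exp (|s| * t) := by
    rw [← Real.exp_add]
    apply Real.one_le_exp
    have := neg_abs_le s
    nlinarith
  have hZ : 0 < z * Real.exp (η * t) := mul_pos h.pos (Real.exp_pos _)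
  rw [zero_mul, Real.exp_zero] at F1
  generalize z * Real.exp (η * t) = Z at *
  generalize Real.exp (p1 * t) = p at *
  generalize Real.exp (q1 * t) = q at *
  generalize Real.exp (s * t) = y at *
  generalize Real.exp (|s| * t) = Y at *
  obtain ⟨δ, hδ⟩ : ∃ δ, δ = (1 - p * q) / (p * q + y * p) := ⟨_, rfl⟩
  have hδ0 : 0 < δ := by rw [hδ]; exact div_pos (by linarith) (by positivity)
  have hδm : δ * (p * q + y * p) = 1 - p * q := by rw [hδ]; field_simp
  refine ⟨δ, 0.9, mkHP Z y 1 Y p 1, mkHP Z 1 y 1 q ((1 + δ) * q / y), rfl, rfl, ?_, ?_⟩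
  · refine mkHalf hZ hδ0 (by norm_num) (by norm_num) hy hyY hY1 one_pos hp one_pos rfl e1 F1.le ?_
      e3 (by linarith) e7.le
    simp only [mkHP]
    rw [one_mul, le_div_iff₀ hp]
    have : y * ((1 + δ) * q / y + δ) = (1 + δ) * q + y * δ := by field_simp
    rw [this]
    linarith
  · refine mkHalf hZ hδ0 (by norm_num) (by norm_num) one_pos le_rfl (by norm_num) (by positivity) hq hy
      rfl e2 F2.le ?_ e4 (by linarith) e8.le
    simp only [mkHP]
    have : (1 + δ) * q / y * (y / q) = 1 + δ := by field_simp
    rw [this]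
    linarith

/-- Uniform bound on the number of continuations. -/
theorem Crit.cont_bound {z : ℝ} (h : Crit z) {η : ℝ} (hη : 0 < η) : ∃ C, 0 < C ∧ ∀ (m n : ℕ) (p : ℕ → ℤ × ℤ),
    Reach n p → z ^ m * Real.exp (-(η * m)) * E (fun _ => 1) m n p ≤ C := by
  have hs : 2 * ca z * (-1) + 0 < 0 := by have := h.ca_pos; linarith
  have hev := (h.params hs).and (Ioo_mem_nhdsGT hη)
  obtain ⟨t, ⟨δ, ρ, P, Q, hPy, hQy, h1, h2⟩, ht⟩ := hev.exists
  rw [zero_mul, Real.exp_zero] at hPy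
  obtain ⟨K, hK⟩ : ∃ K, K = δ⁻¹ * (1 + P.τ⁻¹ + Q.τ⁻¹) := ⟨_, rfl⟩
  have hδ := h1.hδ
  have hτ := h1.hτ
  have hτ' := h2.hτ
  have hKδ : K * δ = 1 + P.τ⁻¹ + Q.τ⁻¹ := by rw [hK]; field_simp
  have hi := inv_pos.2 hτ
  have hi' := inv_pos.2 hτ'
  have k1 : 1 ≤ K * δ := by rw [hKδ]; linarith
  have k2 : 1 ≤ K * δ * P.τ := by
    rw [hKδ]
    have := mul_inv_cancel₀ hτ.ne'
    nlinarith [mul_pos hi' hτ]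
  have k3 : 1 ≤ K * δ * Q.τ := by
    rw [hKδ]
    have := mul_inv_cancel₀ hτ'.ne'
    nlinarith [mul_pos hi hτ']
  have hKpos : 0 < K := by rw [hK]; positivity
  refine ⟨K * (nf ρ 0 * nf ρ 0 * 1 * (P.α + P.α + δ)), ?_, fun m n p hR => ?_⟩
  · have := h1.hα
    have := nf_pos ρ 0
    positivity
  obtain ⟨e, he, xl, xr, yb, yt, hR⟩ := hR
  have key := (claim k1 m P Q h1 h2 k2 k3 n _ _ _ _ _ hR).1
  have hw : wt P.y Q.y (n + m) = fun _ => 1 := by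
    funext q
    simp [wt, hPy, hQy]
  rw [hw, E_sym e he] at key
  have hE : 0 ≤ E (fun _ => 1) m n p := E_nonneg (fun _ => zero_le_one) m n p
  have hz := h.pos
  have hle : z ^ m * Real.exp (-(η * m)) ≤ (z * Real.exp (-1 * t)) ^ m := by
    rw [mul_pow, ← Real.exp_nat_mul]
    gcongr
    have := ht.2
    have : (m : ℝ) * t ≤ m * η := by gcongr
    linarith
  refine (mul_le_mul_of_nonneg_right hle hE).trans (key.trans ?_)
  have hκ : P.κ ≤ 1 := by
    have := h1.c7
    have a1 := h1.hyY
    have a2 := h1.hρ1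
    have a3 := h1.hκ
    rw [hPy] at a1
    nlinarith
  have hκp : ∀ k : ℕ, P.κ ^ k ≤ 1 := fun k => pow_le_one₀ h1.hκ.le hκ
  unfold hO
  rw [hPy, hQy]
  simp only [one_pow, mul_one]
  have hα := h1.hα
  have n1 := nf_le h1.hρ h1.hρ1 (xl + xr + 1)
  have n2 := nf_le h1.hρ h1.hρ1 (yb + yt)
  have n3 := nf_pos ρ (xl + xr + 1)
  have n4 := nf_pos ρ (yb + yt)
  have hκ0 := h1.hκ
  have b1 : P.α * P.κ ^ ((xr : ℤ) - ((e ∘ p) n).1).toNat ≤ P.α :=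
    mul_le_of_le_one_right hα.le (hκp _)
  have b2 : P.α * P.κ ^ ((xl : ℤ) + ((e ∘ p) n).1).toNat ≤ P.α :=
    mul_le_of_le_one_right hα.le (hκp _)
  have := nf_pos ρ 0
  gcongr

/-- Exponential moments of the endpoint. -/
theorem Crit.moment {z : ℝ} (h : Crit z) {s η : ℝ} (hs : 2 * ca z * η + s < 0) :
    ∃ t C, 0 < t ∧ 0 < C ∧ ∀ n : ℕ, 1 ≤ n →
      (z * Real.exp (η * t)) ^ n * E (wt (Real.exp (s * t)) 1 n) n 0 0 ≤ C := by
  classical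
  have hev := (h.params hs).and self_mem_nhdsWithin
  obtain ⟨t, ⟨δ, ρ, P, Q, hPy, hQy, h1, h2⟩, ht⟩ := hev.exists
  have ht : 0 < t := ht
  obtain ⟨K, hK⟩ : ∃ K, K = δ⁻¹ * (1 + P.τ⁻¹ + Q.τ⁻¹) := ⟨_, rfl⟩
  have hδ := h1.hδ
  have hτ := h1.hτ
  have hτ' := h2.hτ
  have hKδ : K * δ = 1 + P.τ⁻¹ + Q.τ⁻¹ := by rw [hK]; field_simp
  have hi := inv_pos.2 hτ
  have hi' := inv_pos.2 hτ'
  have k1 : 1 ≤ K * δ := by rw [hKδ]; linarith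
  have k2 : 1 ≤ K * δ * P.τ := by
    rw [hKδ]
    have := mul_inv_cancel₀ hτ.ne'
    nlinarith [mul_pos hi' hτ]
  have k3 : 1 ≤ K * δ * Q.τ := by
    rw [hKδ]
    have := mul_inv_cancel₀ hτ'.ne'
    nlinarith [mul_pos hi hτ']
  have hKpos : 0 < K := by rw [hK]; positivity
  refine ⟨t, ?_⟩
  rw [← hPy, ← hQy]
  have hZ := h1.hz
  generalize z * Real.exp (η * t) = Z at *
  have hOpos : ∀ P Q, Half Z δ ρ P Q → Half Z δ ρ Q P → 0 < hO ρ δ P Q 0 0 0 1 0 := by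
    intro P Q h1 h2
    have := h1.hα
    have := h1.hy
    have := h2.hy
    have := h1.hκ
    have := nf_pos ρ 1
    unfold hO
    simp
    positivity
  have o1 := hOpos P Q h1 h2
  have o2 := hOpos Q P h2 h1
  obtain ⟨M, hM⟩ : ∃ M, M = K * hO ρ δ P Q 0 0 0 1 0 + K * hO ρ δ Q P 0 0 0 1 0 := ⟨_, rfl⟩
  have o3 : 0 < K * hO ρ δ P Q 0 0 0 1 0 := mul_pos hKpos o1
  have o4 : 0 < K * hO ρ δ Q P 0 0 0 1 0 := mul_pos hKpos o2
  have hMp : 0 < M := by rw [hM]; linarith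
  refine ⟨Z * (4 * M), ht, by positivity, fun n hn => ?_⟩
  obtain ⟨m, rfl⟩ : ∃ m, n = m + 1 := ⟨n - 1, by omega⟩
  have hx : ∀ p, RelT 1 p 0 0 0 1 → (p 1).1 = 0 := by
    intro p hp
    have := hp.box 1 le_rfl
    simp at this
    omega
  have c1 : ∀ p, RelT 1 p 0 0 0 1 → Z ^ m * E (wt P.y Q.y (m + 1)) m 1 p ≤ M := by
    intro p hp
    have := (claim k1 m P Q h1 h2 k2 k3 1 _ _ _ _ _ hp).1
    rw [hx p hp, add_comm 1 m] at this
    linarith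
  have c2 : ∀ p, RelT 1 p 0 0 0 1 → Z ^ m * E (wt Q.y P.y (m + 1)) m 1 p ≤ M := by
    intro p hp
    have := (claim k1 m Q P h2 h1 k3 k2 1 _ _ _ _ _ hp).1
    rw [hx p hp, add_comm 1 m] at this
    linarith
  have hstep : ∀ s ∈ steps, Z ^ m * (if Allowed 0 0 s then
      E (wt P.y Q.y (m + 1)) m (0 + 1) (ext 0 0 s) else 0) ≤ M := by
    intro s hs
    split_ifs
    · rcases first_step hs with h | h | h | h
      · exact c1 _ h
      · have := c2 _ h
        rwa [E_wt_swp] at this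
      · have := c2 _ h
        rwa [E_wt_swp, E_wt_flp] at this
      · have := c1 _ h
        rwa [E_wt_swp, E_wt_flp, E_wt_swp] at this
    · rw [mul_zero]; exact hMp.le
  have hsum : Z ^ m * E (wt P.y Q.y (m + 1)) (m + 1) 0 0 ≤ 4 * M := by
    simp only [E]
    rw [Finset.mul_sum]
    calc _ ≤ ∑ s ∈ steps, M := Finset.sum_le_sum fun s hs => by
            convert hstep s hs
      _ = 4 * M := by
        rw [Finset.sum_const, nsmul_eq_mul]
        rfl
  rw [pow_succ']
  calc _ = Z * (Z ^ m * E (wt P.y Q.y (m + 1)) (m + 1) 0 0) := by ring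
    _ ≤ _ := by gcongr

end PW

namespace PW

open Classical in
/-- Exponential tail bound for the first coordinate of the endpoint. -/
theorem Crit.tail {z : ℝ} (h : Crit z) {s η θ : ℝ} (hs : 2 * ca z * η + s < 0) (hθ : 0 < θ) :
    ∃ C κ : ℝ, 0 < C ∧ 0 < κ ∧ ∀ n : ℕ, 1 ≤ n → z ^ n *
      E (fun q => if θ * n ≤ s * |((q n).1 : ℝ)| + η * n then 1 else 0) n 0 0
        ≤ C * Real.exp (-(κ * n)) := by
  obtain ⟨t, C, ht, hC, hb⟩ := h.moment hs
  refine ⟨C, t * θ, hC, by positivity, fun n hn => ?_⟩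
  have hz := h.pos
  have hmono : E (fun q => if θ * n ≤ s * |((q n).1 : ℝ)| + η * n then (1 : ℝ) else 0) n 0 0 ≤
      E (fun q => Real.exp (t * (η - θ) * n) * wt (Real.exp (s * t)) 1 n q) n 0 0 := by
    refine E_mono (fun q => ?_) n 0 0
    split_ifs with hq
    · simp only [wt, one_pow, mul_one]
      rw [← Real.exp_nat_mul, ← Real.exp_add]
      apply Real.one_le_exp
      rw [Nat.cast_natAbs, Int.cast_abs]
      have : 0 ≤ t * (s * |((q n).1 : ℝ)| + η * n - θ * n) := mul_nonneg ht.le (by linarith)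
      linarith
    · unfold wt; positivity
  rw [E_const_mul] at hmono
  have hb := hb n hn
  calc _ ≤ z ^ n * (Real.exp (t * (η - θ) * n) * E (wt (Real.exp (s * t)) 1 n) n 0 0) := by gcongr
    _ = Real.exp (-(t * θ * n)) * ((z * Real.exp (η * t)) ^ n * E (wt (Real.exp (s * t)) 1 n) n 0 0) := by
      rw [mul_pow, ← Real.exp_nat_mul,
        show t * (η - θ) * n = -(t * θ * n) + n * (η * t) by ring, Real.exp_add]
      ring
    _ ≤ Real.exp (-(t * θ * n)) * C := by gcongr
    _ = _ := by ring

/-- The endpoint is close to a diagonal. -/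
def Good (c ε : ℝ) (n : ℕ) (v : ℤ × ℤ) : Prop :=
  |(|(v.1 : ℝ)|) - c * n| ≤ ε * n ∧ |(|(v.2 : ℝ)|) - c * n| ≤ ε * n

/-- The speed. -/
noncomputable def speed (z : ℝ) : ℝ := 1 / (2 * ca z)

lemma Crit.speed_pos {z : ℝ} (h : Crit z) : 0 < speed z := by
  have := h.ca_pos
  unfold speed; positivity

open Classical in
theorem Crit.bad {z : ℝ} (h : Crit z) {ε : ℝ} (hε : 0 < ε) :
    ∃ C κ : ℝ, 0 < C ∧ 0 < κ ∧ ∀ n : ℕ, 1 ≤ n → z ^ n *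
      E (fun q => if Good (speed z) ε n (q n) then 0 else 1) n 0 0
        ≤ C * Real.exp (-(κ * n)) := by
  have ha := h.ca_pos
  have hca : 2 * ca z * speed z = 1 := by unfold speed; field_simp
  obtain ⟨C₁, κ₁, hC₁, hκ₁, b₁⟩ := h.tail (s := -1) (η := speed z - ε / 2) (θ := ε / 2)
    (by nlinarith) (by linarith)
  obtain ⟨C₂, κ₂, hC₂, hκ₂, b₂⟩ := h.tail (s := 1) (η := -speed z - ε / 2) (θ := ε / 2)
    (by nlinarith) (by linarith)
  refine ⟨2 * (C₁ + C₂), min κ₁ κ₂, by positivity, lt_min hκ₁ hκ₂, fun n hn => ?_⟩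
  have hz := h.pos
  have b₁ := b₁ n hn
  have b₂ := b₂ n hn
  let f₁ : (ℕ → ℤ × ℤ) → ℝ := fun q =>
    if ε / 2 * n ≤ -1 * |((q n).1 : ℝ)| + (speed z - ε / 2) * n then 1 else 0
  let f₂ : (ℕ → ℤ × ℤ) → ℝ := fun q =>
    if ε / 2 * n ≤ 1 * |((q n).1 : ℝ)| + (-speed z - ε / 2) * n then 1 else 0
  have sw : ∀ f : (ℕ → ℤ × ℤ) → ℝ, E (fun q => f (swp ∘ q)) n 0 0 = E f n 0 0 := by
    intro f
    rw [← E_sym swp swp_sym f n 0 0]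
    rfl
  have h01 : ∀ q, 0 ≤ f₁ q := fun q => by simp only [f₁]; split_ifs <;> norm_num
  have h02 : ∀ q, 0 ≤ f₂ q := fun q => by simp only [f₂]; split_ifs <;> norm_num
  have key : ∀ q, (if Good (speed z) ε n (q n) then (0 : ℝ) else 1) ≤
      (f₁ q + f₂ q) + (f₁ (swp ∘ q) + f₂ (swp ∘ q)) := by
    intro q
    have a1 := h01 q
    have a2 := h02 q
    have a3 := h01 (swp ∘ q)
    have a4 := h02 (swp ∘ q)
    split_ifs with hq
    · linarith
    · by_contra hcon
      push Not at hcon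
      apply hq
      have e1 : f₁ q < 1 := by linarith
      have e2 : f₂ q < 1 := by linarith
      have e3 : f₁ (swp ∘ q) < 1 := by linarith
      have e4 : f₂ (swp ∘ q) < 1 := by linarith
      simp only [f₁, f₂, Function.comp, swp_apply] at e1 e2 e3 e4
      have ite_lt : ∀ (a b : ℝ), (if a ≤ b then (1 : ℝ) else 0) < 1 → b < a := by
        intro a b hab
        by_contra hba
        rw [if_pos (not_lt.1 hba)] at hab
        exact lt_irrefl _ hab
      have e1 := ite_lt _ _ e1
      have e2 := ite_lt _ _ e2
      have e3 := ite_lt _ _ e3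
      have e4 := ite_lt _ _ e4
      constructor <;> rw [abs_le] <;> constructor <;> linarith
  have hE : E (fun q => if Good (speed z) ε n (q n) then (0 : ℝ) else 1) n 0 0 ≤
      2 * (E f₁ n 0 0 + E f₂ n 0 0) := by
    refine (E_mono key n 0 0).trans (le_of_eq ?_)
    rw [E_add, sw (fun q => f₁ q + f₂ q), E_add]
    ring
  have m1 : Real.exp (-(κ₁ * n)) ≤ Real.exp (-(min κ₁ κ₂ * n)) := by
    gcongr; exact min_le_left _ _
  have m2 : Real.exp (-(κ₂ * n)) ≤ Real.exp (-(min κ₁ κ₂ * n)) := by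
    gcongr; exact min_le_right _ _
  calc _ ≤ z ^ n * (2 * (E f₁ n 0 0 + E f₂ n 0 0)) := by gcongr
    _ = 2 * (z ^ n * E f₁ n 0 0 + z ^ n * E f₂ n 0 0) := by ring
    _ ≤ 2 * (C₁ * Real.exp (-(κ₁ * n)) + C₂ * Real.exp (-(κ₂ * n))) := by
      gcongr
    _ ≤ 2 * (C₁ * Real.exp (-(min κ₁ κ₂ * n)) + C₂ * Real.exp (-(min κ₁ κ₂ * n))) := by gcongr
    _ = _ := by ring

/-- The path is close to a diagonal at all times after `δ L`. -/
def GoodPath (c ε δ : ℝ) (L : ℕ) (q : ℕ → ℤ × ℤ) : Prop :=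
  ∀ n : ℕ, 1 ≤ n → n ≤ L → δ * L ≤ n → Good c ε n (q n)

open Classical in
theorem Crit.badPath {z : ℝ} (h : Crit z) {ε δ : ℝ} (hε : 0 < ε) (hδ : 0 < δ) :
    ∃ C θ : ℝ, 0 < C ∧ 0 < θ ∧ ∀ L : ℕ, z ^ L *
      E (fun q => if GoodPath (speed z) ε δ L q then 0 else 1) L 0 0
        ≤ L * (C * Real.exp (-(θ * L))) := by
  obtain ⟨C, κ, hC, hκ, hb⟩ := h.bad hε
  obtain ⟨C', hC', hb'⟩ := h.cont_bound (η := κ * δ / 2) (by positivity)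
  have hz := h.pos
  refine ⟨C * C', κ * δ / 2, by positivity, by positivity, fun L => ?_⟩
  let S := (Finset.Icc 1 L).filter (fun n : ℕ => δ * L ≤ n)
  let f : ℕ → (ℕ → ℤ × ℤ) → ℝ := fun n q => if Good (speed z) ε n (q n) then 0 else 1
  have hf0 : ∀ n q, 0 ≤ f n q := fun n q => by simp only [f]; split_ifs <;> norm_num
  have key : ∀ q, (if GoodPath (speed z) ε δ L q then (0 : ℝ) else 1) ≤ ∑ n ∈ S, f n q := by
    intro q
    split_ifs with hq
    · exact Finset.sum_nonneg fun n _ => hf0 n q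
    · unfold GoodPath at hq
      push Not at hq
      obtain ⟨n, h1, h2, h3, h4⟩ := hq
      have hn : n ∈ S := by simp [S, h1, h2, h3]
      calc (1 : ℝ) = f n q := by simp only [f]; rw [if_neg h4]
        _ ≤ _ := Finset.single_le_sum (f := fun n => f n q) (fun n _ => hf0 n q) hn
  have hterm : ∀ n ∈ S, z ^ L * E (f n) L 0 0 ≤ C * C' * Real.exp (-(κ * δ / 2 * L)) := by
    intro n hn
    simp only [S, Finset.mem_filter, Finset.mem_Icc] at hn
    obtain ⟨⟨h1, h2⟩, h3⟩ := hn
    obtain ⟨m, rfl⟩ : ∃ m, L = n + m := ⟨L - n, by omega⟩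
    have hpt : ∀ q, Reach n q → E (f n) m (0 + n) q ≤
        (C' * Real.exp (κ * δ / 2 * m) / z ^ m) * f n q := by
      intro q hq
      have e1 : E (f n) m (0 + n) q = f n q * E (fun _ => 1) m n q := by
        have := E_pull (fun v => if Good (speed z) ε n v then (0 : ℝ) else 1) (fun _ => 1) n m n q le_rfl
        rw [zero_add, ← this]
        simp [f]
      rw [e1, mul_comm]
      have := hf0 n q
      gcongr
      rw [le_div_iff₀ (by positivity)]
      have h2 := hb' m n q hq
      have h3 : Real.exp (κ * δ / 2 * m) * Real.exp (-(κ * δ / 2 * m)) = 1 := by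
        rw [← Real.exp_add]; simp
      calc E (fun _ => 1) m n q * z ^ m
          = Real.exp (κ * δ / 2 * m) * (z ^ m * Real.exp (-(κ * δ / 2 * m)) * E (fun _ => 1) m n q) := by
            linear_combination -(E (fun _ => 1) m n q * z ^ m) * h3
        _ ≤ Real.exp (κ * δ / 2 * m) * C' := by gcongr
        _ = _ := by ring
    have hE := E_mono_init h1 hpt
    rw [E_const_mul, ← E_split] at hE
    have hbn := hb n h1
    push_cast at h3 ⊢
    calc z ^ (n + m) * E (f n) (n + m) 0 0
        ≤ z ^ (n + m) * (C' * Real.exp (κ * δ / 2 * m) / z ^ m * E (f n) n 0 0) := by gcongr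
      _ = C' * Real.exp (κ * δ / 2 * m) * (z ^ n * E (f n) n 0 0) := by
        rw [pow_add]; field_simp
      _ ≤ C' * Real.exp (κ * δ / 2 * m) * (C * Real.exp (-(κ * n))) := by gcongr
      _ = C * C' * Real.exp (κ * δ / 2 * m - κ * n) := by
        rw [sub_eq_add_neg, Real.exp_add]; ring
      _ ≤ _ := by
        gcongr
        have : κ * (δ * (n + m)) ≤ κ * n := by gcongr
        have : 0 ≤ κ * δ * n := by positivity
        nlinarith
  calc _ ≤ z ^ L * E (fun q => ∑ n ∈ S, f n q) L 0 0 := by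
        gcongr
        exact E_mono key L 0 0
    _ = ∑ n ∈ S, z ^ L * E (f n) L 0 0 := by rw [E_sum, Finset.mul_sum]
    _ ≤ ∑ n ∈ S, C * C' * Real.exp (-(κ * δ / 2 * L)) := Finset.sum_le_sum hterm
    _ ≤ _ := by
      rw [Finset.sum_const, nsmul_eq_mul]
      gcongr
      calc S.card ≤ (Finset.Icc 1 L).card := Finset.card_filter_le _ _
        _ = L := by simp

end PW

namespace PW

/-- One coordinate: the signs are frozen. -/
lemma coord {c ε δ η : ℝ} (hc : 0 < c) (hε : ε < c) (hεη : ε ≤ η) (hδ : 0 < δ)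
    (hδη : (1 + c) * δ ≤ η) (L : ℕ) (x : ℕ → ℤ) (h0 : x 0 = 0)
    (hs : ∀ n < L, |x (n + 1) - x n| ≤ 1)
    (hg : ∀ n : ℕ, 1 ≤ n → n ≤ L → δ * L ≤ n → |(|(x n : ℝ)|) - c * n| ≤ ε * n) :
    ∃ σ : ℤ, (σ = 1 ∨ σ = -1) ∧ ∀ n ≤ L, |(x n : ℝ) - σ * c * n| ≤ η * L := by
  have hle : ∀ n ≤ L, |x n| ≤ n := by
    intro n
    induction n with
    | zero => simp [h0]
    | succ n ih =>
      intro hn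
      have h1 := ih (by omega)
      have h2 := hs n (by omega)
      rw [abs_le] at *
      push_cast
      omega
  have early : ∀ σ : ℤ, (σ = 1 ∨ σ = -1) → ∀ n ≤ L, (n : ℝ) ≤ δ * L →
      |(x n : ℝ) - σ * c * n| ≤ η * L := by
    intro σ hσ n hn hnd
    have h1 : |(x n : ℝ)| ≤ n := by exact_mod_cast hle n hn
    have h2 : |(σ : ℝ) * c * n| = c * n := by
      rw [abs_mul, abs_mul, abs_of_pos hc, Nat.abs_cast]
      rcases hσ with rfl | rfl <;> simp
    calc _ ≤ |(x n : ℝ)| + |(σ : ℝ) * c * n| := abs_sub _ _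
      _ ≤ (1 + c) * n := by rw [h2]; linarith
      _ ≤ (1 + c) * (δ * L) := by gcongr
      _ ≤ η * L := by
        have : (0 : ℝ) ≤ L := Nat.cast_nonneg _
        nlinarith
  let n0 := max 1 ⌈δ * L⌉₊
  by_cases hL : n0 ≤ L
  · have hn0 : ∀ n, n0 ≤ n → 1 ≤ n ∧ δ * L ≤ n := by
      intro n hn
      exact ⟨(le_max_left _ _).trans hn, Nat.ceil_le.1 ((le_max_right _ _).trans hn)⟩
    have hne : ∀ n, n0 ≤ n → n ≤ L → x n ≠ 0 := by
      intro n hn hnL h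
      obtain ⟨h1, h2⟩ := hn0 n hn
      have := hg n h1 hnL h2
      rw [h] at this
      have h1' : (1 : ℝ) ≤ n := by exact_mod_cast h1
      simp only [Int.cast_zero, abs_zero, zero_sub, abs_neg] at this
      rw [abs_of_pos (by positivity)] at this
      nlinarith
    obtain ⟨σ, hσ, hσ0⟩ : ∃ σ : ℤ, (σ = 1 ∨ σ = -1) ∧ 1 ≤ σ * x n0 := by
      rcases lt_or_gt_of_ne (hne n0 le_rfl hL) with h | h
      · exact ⟨-1, Or.inr rfl, by omega⟩
      · exact ⟨1, Or.inl rfl, by omega⟩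
    have hpos : ∀ k, n0 + k ≤ L → 1 ≤ σ * x (n0 + k) := by
      intro k
      induction k with
      | zero => intro _; exact hσ0
      | succ k ih =>
        intro hk
        have h1 := ih (by omega)
        have h2 := hs (n0 + k) (by omega)
        have h3 := hne (n0 + (k + 1)) (by omega) hk
        rw [← add_assoc] at h3 ⊢
        rw [abs_le] at h2
        rcases hσ with rfl | rfl <;> omega
    refine ⟨σ, hσ, fun n hn => ?_⟩
    rcases le_or_gt n0 n with h | h
    · obtain ⟨k, rfl⟩ := Nat.exists_eq_add_of_le h
      have hp := hpos k hn
      obtain ⟨h1, h2⟩ := hn0 _ h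
      have hgd := hg _ h1 hn h2
      have hLn : ((n0 + k : ℕ) : ℝ) ≤ L := by exact_mod_cast hn
      have hfin : |(x (n0 + k) : ℝ) - σ * c * (n0 + k : ℕ)| =
          |(|(x (n0 + k) : ℝ)|) - c * (n0 + k : ℕ)| := by
        rcases hσ with rfl | rfl
        · have : (0 : ℝ) < x (n0 + k) := by exact_mod_cast (by omega : 0 < x (n0 + k))
          rw [abs_of_pos this]; simp
        · have : (x (n0 + k) : ℝ) < 0 := by exact_mod_cast (by omega : x (n0 + k) < 0)
          rw [abs_of_neg this, ← abs_neg]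
          congr 1
          push_cast; ring
      rw [hfin]
      have hη : 0 ≤ η := by nlinarith
      calc _ ≤ ε * (n0 + k : ℕ) := hgd
        _ ≤ η * (n0 + k : ℕ) := by gcongr
        _ ≤ η * L := by gcongr
    · refine early σ hσ n hn ?_
      rcases lt_max_iff.1 h with h' | h'
      · have : n = 0 := by omega
        subst this
        simp only [Nat.cast_zero]
        positivity
      · exact (Nat.lt_ceil.1 h').le
  · refine ⟨1, Or.inl rfl, fun n hn => early 1 (Or.inl rfl) n hn ?_⟩
    have h : n < n0 := by omega
    rcases lt_max_iff.1 h with h' | h'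
    · have : n = 0 := by omega
      subst this
      simp only [Nat.cast_zero]
      positivity
    · exact (Nat.lt_ceil.1 h').le

lemma interp {c η : ℝ} (hc : 0 < c) {L : ℕ} (hL : 1 ≤ L) {x : ℕ → ℤ} {σ : ℤ}
    (hσ : σ = 1 ∨ σ = -1) (hs : ∀ n < L, |x (n + 1) - x n| ≤ 1)
    (hx : ∀ n ≤ L, |(x n : ℝ) - σ * c * n| ≤ η * L) {t : ℝ} (ht : t ∈ Icc (0 : ℝ) 1) :
    |(L : ℝ)⁻¹ * ((x (min ⌊t * L⌋₊ L) : ℝ) + (t * L - (⌊t * L⌋₊ : ℝ)) *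
      ((x (min (⌊t * L⌋₊ + 1) L) : ℝ) - (x (min ⌊t * L⌋₊ L) : ℝ))) - c * t * σ|
      ≤ η + (1 + c) / L := by
  have hLp : (0 : ℝ) < L := by exact_mod_cast hL
  have htL : 0 ≤ t * L := mul_nonneg ht.1 hLp.le
  have hn : ⌊t * L⌋₊ ≤ L := by
    apply Nat.floor_le_of_le
    nlinarith [ht.2]
  have f0 := Nat.floor_le htL
  have f1 := Nat.lt_floor_add_one (t * L)
  rw [min_eq_left hn]
  generalize ⌊t * L⌋₊ = n at *
  obtain ⟨f, hf⟩ : ∃ f, f = t * L - n := ⟨_, rfl⟩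
  rw [← hf]
  have hd : |((x (min (n + 1) L) : ℝ) - (x n : ℝ))| ≤ 1 := by
    rcases Nat.lt_or_ge n L with h | h
    · rw [min_eq_left (by omega)]
      exact_mod_cast hs n h
    · rw [min_eq_right (by omega), show n = L by omega]
      simp
  generalize ((x (min (n + 1) L) : ℝ) - (x n : ℝ)) = d at *
  have h1 := hx n hn
  have ht' : t = (n + f) / L := by rw [hf]; field_simp; ring
  have e : (L : ℝ)⁻¹ * ((x n : ℝ) + f * d) - c * t * σ =
      ((x n - σ * c * n) + f * d - c * f * σ) / L := by
    rw [ht']; field_simp; ring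
  have hfa : |f| ≤ 1 := by rw [abs_le]; constructor <;> linarith
  have a1 : |f * d| ≤ 1 := by
    rw [abs_mul]; exact mul_le_one₀ hfa (abs_nonneg _) hd
  have a2 : |c * f * σ| ≤ c := by
    have : |(σ : ℝ)| = 1 := by rcases hσ with rfl | rfl <;> simp
    rw [abs_mul, abs_mul, this, abs_of_pos hc]
    nlinarith
  rw [e, abs_div, abs_of_pos hLp, div_le_iff₀ hLp]
  have : (η + (1 + c) / L) * L = η * L + 1 + c := by field_simp; ring
  rw [this]
  calc _ ≤ |(x n - σ * c * n : ℝ) + f * d| + |c * f * σ| := abs_sub _ _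
    _ ≤ |(x n - σ * c * n : ℝ)| + |f * d| + |c * f * σ| := by gcongr; exact abs_add_le _ _
    _ ≤ _ := by linarith

lemma enorm2_le (v : ℝ × ℝ) : enorm2 v ≤ |v.1| + |v.2| := by
  unfold enorm2
  rw [Real.sqrt_le_left (by positivity)]
  nlinarith [sq_abs v.1, sq_abs v.2, abs_nonneg v.1, abs_nonneg v.2, mul_nonneg (abs_nonneg v.1) (abs_nonneg v.2)]

lemma exists_evec {σ τ : ℤ} (hσ : σ = 1 ∨ σ = -1) (hτ : τ = 1 ∨ τ = -1) :
    ∃ i ∈ Finset.Icc 1 4, evec i = ((σ : ℝ), (τ : ℝ)) := by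
  rcases hσ with rfl | rfl <;> rcases hτ with rfl | rfl
  · exact ⟨1, by simp, by simp [evec]⟩
  · exact ⟨4, by simp, by simp [evec]⟩
  · exact ⟨2, by simp, by simp [evec]⟩
  · exact ⟨3, by simp, by simp [evec]⟩

/-- The target event. -/
def Ev (c ε : ℝ) (L : ℕ) : Set (Fin (L + 1) → ℤ × ℤ) :=
  {π | ∃ i ∈ Finset.Icc 1 4,
    ∀ t ∈ Set.Icc (0 : ℝ) 1, enorm2 (rescaled L π t - (c * t) • evec i) ≤ ε}

theorem det {c ε ε' δ : ℝ} (hc : 0 < c) (hε' : ε' < c) (h1 : ε' ≤ ε / 4) (hδ : 0 < δ)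
    (h2 : (1 + c) * δ ≤ ε / 4) {L : ℕ} (hL : 1 ≤ L) (h3 : (1 + c) / L ≤ ε / 4)
    {q : ℕ → ℤ × ℤ} (hq : q ∈ PS L) (hg : GoodPath c ε' δ L q) : restr L q ∈ Ev c ε L := by
  obtain ⟨hq0, -, hqs⟩ := hq
  have hs1 : ∀ n < L, |(q (n + 1)).1 - (q n).1| ≤ 1 ∧ |(q (n + 1)).2 - (q n).2| ≤ 1 := by
    intro n hn
    have := (hqs n hn).1
    have e1 : (q (n + 1)).1 - (q n).1 = (q (n + 1) - q n).1 := rfl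
    have e2 : (q (n + 1)).2 - (q n).2 = (q (n + 1) - q n).2 := rfl
    rw [e1, e2]
    generalize q (n + 1) - q n = s at *
    simp only [steps, Finset.mem_insert, Finset.mem_singleton] at this
    rcases this with rfl | rfl | rfl | rfl <;> simp
  obtain ⟨σ, hσ, hx⟩ := coord hc hε' h1 hδ h2 L (fun n => (q n).1) (by simp [hq0])
    (fun n hn => (hs1 n hn).1) (fun n a b d => (hg n a b d).1)
  obtain ⟨τ, hτ, hy⟩ := coord hc hε' h1 hδ h2 L (fun n => (q n).2) (by simp [hq0])
    (fun n hn => (hs1 n hn).2) (fun n a b d => (hg n a b d).2)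
  obtain ⟨i, hi, hev⟩ := exists_evec hσ hτ
  refine ⟨i, hi, fun t ht => ?_⟩
  have k1 := interp hc hL hσ (fun n hn => (hs1 n hn).1) hx ht
  have k2 := interp hc hL hτ (fun n hn => (hs1 n hn).2) hy ht
  refine (enorm2_le _).trans ?_
  rw [hev]
  simp only [rescaled, toR, restr, Prod.fst_sub, Prod.snd_sub, Prod.smul_fst, Prod.smul_snd,
    Prod.fst_add, Prod.snd_add, smul_eq_mul]
  linarith

lemma E_mono_PS {L : ℕ} {f g : (ℕ → ℤ × ℤ) → ℝ} (h : ∀ q ∈ PS L, f q ≤ g q) :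
    E f L 0 0 ≤ E g L 0 0 := by
  obtain ⟨T, hT, hE⟩ := exists_T L
  rw [hE, hE]
  exact Finset.sum_le_sum fun q hq => h q ((hT q).1 hq)

theorem final {z : ℝ} (h : Crit z) {ε : ℝ} (hε : 0 < ε) :
    Tendsto (fun L : ℕ => probUnif L (Ev (speed z) ε L)) atTop (nhds 1) := by
  classical
  have hc := h.speed_pos
  generalize hcs : speed z = c at *
  obtain ⟨ε', hε'0, hε'c, hε'⟩ : ∃ ε', 0 < ε' ∧ ε' < c ∧ ε' ≤ ε / 4 :=
    ⟨min (c / 2) (ε / 4), by positivity, (min_le_left _ _).trans_lt (by linarith), min_le_right _ _⟩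
  have hδ : 0 < ε / (4 * (1 + c)) := by positivity
  have hδ2 : (1 + c) * (ε / (4 * (1 + c))) ≤ ε / 4 := by
    apply le_of_eq; field_simp
  generalize ε / (4 * (1 + c)) = δ at *
  obtain ⟨C, θ, hC, hθ, hb⟩ := h.badPath hε'0 hδ
  rw [hcs] at hb
  have hz := h.pos
  have hN : ∀ L, probUnif L (Ev c ε L) =
      E (fun q => if restr L q ∈ Ev c ε L then 1 else 0) L 0 0 / E (fun _ => 1) L 0 0 := by
    intro L
    unfold probUnif
    rw [card_eq]
    congr 1
    have := card_eq L univ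
    rw [univ_inter] at this
    rw [this]
    simp
  have hlow : ∀ L, 1 ≤ z ^ L * E (fun _ => 1) L 0 0 := fun L => lower_init h.lo h.hi h.root L
  have hpos : ∀ L, 0 < E (fun _ => 1) L 0 0 := by
    intro L
    have := hlow L
    by_contra hcon
    push Not at hcon
    have hzL : 0 < z ^ L := by positivity
    nlinarith
  have hlim : Tendsto (fun L : ℕ => 1 - (L : ℝ) * (C * Real.exp (-(θ * L)))) atTop (nhds 1) := by
    have hr := tendsto_pow_const_mul_const_pow_of_abs_lt_one 1 (r := Real.exp (-θ))
      (by rw [abs_of_pos (Real.exp_pos _), Real.exp_lt_one_iff]; linarith)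
    have := (hr.const_mul C).const_sub 1
    rw [mul_zero, sub_zero] at this
    refine this.congr fun L => ?_
    rw [← Real.exp_nat_mul, pow_one, show (L : ℝ) * -θ = -(θ * L) by ring]
    ring
  have hlarge : ∀ᶠ L : ℕ in atTop, (1 + c) / (L : ℝ) ≤ ε / 4 := by
    have := tendsto_const_div_atTop_nhds_zero_nat (1 + c)
    exact (this.eventually_lt_const (by positivity : 0 < ε / 4)).mono fun _ h => h.le
  refine tendsto_of_tendsto_of_tendsto_of_le_of_le' hlim tendsto_const_nhds ?_ ?_
  · filter_upwards [hlarge, eventually_ge_atTop 1] with L h3 hL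
    rw [hN, le_div_iff₀ (hpos L)]
    have hE : E (fun _ => 1) L 0 0 ≤ E (fun q => if restr L q ∈ Ev c ε L then 1 else 0) L 0 0 +
        E (fun q => if GoodPath c ε' δ L q then 0 else 1) L 0 0 := by
      rw [← E_add]
      refine E_mono_PS fun q hq => ?_
      by_cases hg : GoodPath c ε' δ L q
      · rw [if_pos hg, if_pos (det hc hε'c hε' hδ hδ2 hL h3 hq hg)]; norm_num
      · rw [if_neg hg]
        split_ifs <;> norm_num
    have hbL := hb L
    have h1 := hlow L
    have hbad0 : 0 ≤ E (fun q => if GoodPath c ε' δ L q then (0 : ℝ) else 1) L 0 0 :=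
      E_nonneg (fun q => by split_ifs <;> norm_num) L 0 0
    generalize E (fun q => if GoodPath c ε' δ L q then (0 : ℝ) else 1) L 0 0 = b at *
    have hNp := hpos L
    generalize E (fun _ => 1) L 0 0 = N at *
    have : b ≤ L * (C * Real.exp (-(θ * L))) * N := by
      calc b = b * 1 := by ring
        _ ≤ b * (z ^ L * N) := by gcongr
        _ = (z ^ L * b) * N := by ring
        _ ≤ _ := by gcongr
    linarith
  · refine Eventually.of_forall fun L => ?_
    rw [hN, div_le_one (hpos L)]
    refine E_mono (fun q => ?_) L 0 0
    split_ifs <;> norm_num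

end PW

/-- **Concentration along the diagonals.** There is a constant `c > 0` such that for every
`ε > 0`, the `P_{unif,L}`-probability that the rescaled prudent path stays within distance
`ε` of the segment `t ↦ c t e⃗ᵢ` for some diagonal direction `i ∈ {1,2,3,4}` tends to `1`. -/
theorem uniform_prudent_concentration :
    ∃ c : ℝ, 0 < c ∧ ∀ ε : ℝ, 0 < ε →
      Tendsto (fun L : ℕ =>
          probUnif L {π | ∃ i ∈ Finset.Icc 1 4,
            ∀ t ∈ Set.Icc (0 : ℝ) 1, enorm2 (rescaled L π t - (c * t) • evec i) ≤ ε})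
        atTop (nhds 1) := by
  obtain ⟨z, hz⟩ := PW.exists_crit
  exact ⟨PW.speed z, hz.speed_pos, fun ε hε => PW.final hz hε⟩
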